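/- Let C ∈ RH∞^{n×n} be real-rational and γ > 0. Then [P,C] is stable for every P in N₀ satisfying P(∞) ≥ 0 and P(0) < γI if and only if C is strictly negative imaginary (SNI) and C(0) ≤ (1/γ)I. -/

import Mathlib

open Matrix Polynomial Filter Topology
open scoped ComplexOrder

noncomputable section

namespace NIControl

/-- Evaluate a real-rational function at a complex point (junk value at poles). -/
def evalC (f : RatFunc ℝ) (s : ℂ) : ℂ :=
  f.eval (algebraMap ℝ ℂ) s

/-- `s` is a pole of the real-rational function `f`
(the reduced denominator vanishes at `s`). -/
def IsPoleAt (f : RatFunc ℝ) (s : ℂ) : Prop :=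
  f.denom.eval₂ (algebraMap ℝ ℂ) s = 0

variable {n : ℕ}

/-- Pointwise evaluation of a real-rational transfer matrix at a complex point. -/
def evalM (G : Matrix (Fin n) (Fin n) (RatFunc ℝ)) (s : ℂ) : Matrix (Fin n) (Fin n) ℂ :=
  Matrix.of fun i j => evalC (G i j) s

/-- Pointwise evaluation of a real-rational transfer matrix at a real point. -/
def evalR (G : Matrix (Fin n) (Fin n) (RatFunc ℝ)) (x : ℝ) : Matrix (Fin n) (Fin n) ℝ :=
  Matrix.of fun i j => (G i j).eval (RingHom.id ℝ) x

/-- Value at `s = ∞` of a proper real-rational function. -/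
def atInfinity (f : RatFunc ℝ) : ℝ :=
  if f.num.degree = f.denom.degree then f.num.leadingCoeff / f.denom.leadingCoeff else 0

/-- The instantaneous gain `G(∞)` of a proper real-rational transfer matrix. -/
def evalInf (G : Matrix (Fin n) (Fin n) (RatFunc ℝ)) : Matrix (Fin n) (Fin n) ℝ :=
  Matrix.of fun i j => atInfinity (G i j)

/-- The matrix `G` has a pole at `s`. -/
def HasPole (G : Matrix (Fin n) (Fin n) (RatFunc ℝ)) (s : ℂ) : Prop :=
  ∃ i j, IsPoleAt (G i j) s

/-- All entries of `G` are proper rational functions. -/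
def Proper (G : Matrix (Fin n) (Fin n) (RatFunc ℝ)) : Prop :=
  ∀ i j, (G i j).num.degree ≤ (G i j).denom.degree

/-- All entries of `G` are strictly proper rational functions. -/
def StrictlyProper (G : Matrix (Fin n) (Fin n) (RatFunc ℝ)) : Prop :=
  ∀ i j, (G i j).num.degree < (G i j).denom.degree

/-- The pole of `G` at the origin (if any) is at most simple. -/
def NoDoubleOriginPole (G : Matrix (Fin n) (Fin n) (RatFunc ℝ)) : Prop :=
  ∀ i j, (G i j).denom.rootMultiplicity 0 ≤ 1

/-- Membership in `RH∞`: proper and no poles in the closed right-half complex plane. -/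
def MemRHinf {m : Type*} [Fintype m] (G : Matrix m m (RatFunc ℝ)) : Prop :=
  (∀ i j, (G i j).num.degree ≤ (G i j).denom.degree) ∧
  ∀ s : ℂ, 0 ≤ s.re → ∀ i j, ¬ IsPoleAt (G i j) s

/-- The point `jω` on the imaginary axis. -/
def jw (ω : ℝ) : ℂ := Complex.I * (ω : ℂ)

/-- The negative-imaginary frequency kernel `j (M − M*)`. -/
def niKer (M : Matrix (Fin n) (Fin n) ℂ) : Matrix (Fin n) (Fin n) ℂ :=
  Complex.I • (M - Mᴴ)

/-- Negative imaginary (NI) real-rational transfer matrix. -/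
def IsNI (G : Matrix (Fin n) (Fin n) (RatFunc ℝ)) : Prop :=
  Proper G ∧
  (∀ s : ℂ, 0 < s.re → ¬ HasPole G s) ∧
  (∀ ω : ℝ, 0 < ω → ¬ HasPole G (jw ω) → (niKer (evalM G (jw ω))).PosSemidef) ∧
  (∀ ω : ℝ, 0 < ω → HasPole G (jw ω) →
    ∃ R : Matrix (Fin n) (Fin n) ℂ, R.PosSemidef ∧
      Tendsto (fun s : ℂ => (s - jw ω) • Complex.I • evalM G s) (𝓝[≠] jw ω) (𝓝 R)) ∧
  (HasPole G 0 →
    (∀ k : ℕ, 3 ≤ k → Tendsto (fun s : ℂ => s ^ k • evalM G s) (𝓝[≠] 0) (𝓝 0)) ∧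
    ∃ R : Matrix (Fin n) (Fin n) ℂ, R.PosSemidef ∧
      Tendsto (fun s : ℂ => s ^ 2 • evalM G s) (𝓝[≠] 0) (𝓝 R))

/-- Strictly negative imaginary (SNI) real-rational transfer matrix. -/
def IsSNI (G : Matrix (Fin n) (Fin n) (RatFunc ℝ)) : Prop :=
  MemRHinf G ∧ ∀ ω : ℝ, 0 < ω → (niKer (evalM G (jw ω))).PosDef

/-- Positive real (passive) real-rational transfer matrix. -/
def IsPositiveReal (G : Matrix (Fin n) (Fin n) (RatFunc ℝ)) : Prop :=
  MemRHinf G ∧ ∀ ω : ℝ, 0 ≤ ω → (evalM G (jw ω) + (evalM G (jw ω))ᴴ).PosSemidef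

/-- Output strictly passive real-rational transfer matrix. -/
def IsOSP (G : Matrix (Fin n) (Fin n) (RatFunc ℝ)) : Prop :=
  MemRHinf G ∧ ∃ ε : ℝ, 0 < ε ∧ ∀ ω : ℝ, 0 ≤ ω →
    (evalM G (jw ω) + (evalM G (jw ω))ᴴ -
      (ε : ℂ) • ((evalM G (jw ω))ᴴ * evalM G (jw ω))).PosSemidef

/-- Stability of the positive feedback interconnection `[P, C]`:
`[I; C] (I − P C)⁻¹ [I, P] ∈ RH∞`. -/
def FeedbackStable (P C : Matrix (Fin n) (Fin n) (RatFunc ℝ)) : Prop :=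
  ((1 : Matrix (Fin n) (Fin n) (RatFunc ℝ)) - P * C).det ≠ 0 ∧
  MemRHinf (Matrix.fromBlocks
    (1 - P * C)⁻¹ ((1 - P * C)⁻¹ * P)
    (C * (1 - P * C)⁻¹) (C * (1 - P * C)⁻¹ * P))

/-- All eigenvalues of the complex matrix `M` are real and less than `c`. -/
def eigsRealAndLT (M : Matrix (Fin n) (Fin n) ℂ) (c : ℝ) : Prop :=
  ∀ μ ∈ spectrum ℂ M, μ.im = 0 ∧ μ.re < c

/-- The (real) eigenvalues of the real matrix `M` are all real and its largest
eigenvalue is less than `c`. -/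
def maxEigLT (M : Matrix (Fin n) (Fin n) ℝ) (c : ℝ) : Prop :=
  eigsRealAndLT (M.map (Complex.ofReal)) c

/-- Loewner order `A ≤ B` on real matrices. -/
def LoewnerLE (A B : Matrix (Fin n) (Fin n) ℝ) : Prop := (B - A).PosSemidef

/-- Strict Loewner order `A < B` on real matrices. -/
def LoewnerLT (A B : Matrix (Fin n) (Fin n) ℝ) : Prop := (B - A).PosDef
/-! ### Part 1: evaluation of rational functions -/

lemma np_add {f g : RatFunc ℝ} {s : ℂ} (hf : ¬ IsPoleAt f s) (hg : ¬ IsPoleAt g s) :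
    ¬ IsPoleAt (f + g) s := by
  intro h
  have := Polynomial.eval₂_eq_zero_of_dvd_of_eval₂_eq_zero _ _ (RatFunc.denom_add_dvd f g) h
  rw [Polynomial.eval₂_mul] at this
  rcases mul_eq_zero.mp this with h | h
  exacts [hf h, hg h]

lemma np_mul {f g : RatFunc ℝ} {s : ℂ} (hf : ¬ IsPoleAt f s) (hg : ¬ IsPoleAt g s) :
    ¬ IsPoleAt (f * g) s := by
  intro h
  have := Polynomial.eval₂_eq_zero_of_dvd_of_eval₂_eq_zero _ _ (RatFunc.denom_mul_dvd f g) h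
  rw [Polynomial.eval₂_mul] at this
  rcases mul_eq_zero.mp this with h | h
  exacts [hf h, hg h]

lemma np_C (c : ℝ) (s : ℂ) : ¬ IsPoleAt (RatFunc.C c) s := by
  simp [IsPoleAt]

lemma np_zero (s : ℂ) : ¬ IsPoleAt 0 s := by
  simp [IsPoleAt]

lemma np_one (s : ℂ) : ¬ IsPoleAt 1 s := by
  simp [IsPoleAt]

lemma np_neg {f : RatFunc ℝ} {s : ℂ} (hf : ¬ IsPoleAt f s) : ¬ IsPoleAt (-f) s := by
  have : -f = RatFunc.C (-1) * f := by simp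
  rw [this]
  exact np_mul (np_C _ _) hf

lemma np_sub {f g : RatFunc ℝ} {s : ℂ} (hf : ¬ IsPoleAt f s) (hg : ¬ IsPoleAt g s) :
    ¬ IsPoleAt (f - g) s := by
  rw [sub_eq_add_neg]; exact np_add hf (np_neg hg)

lemma np_sum {ι : Type*} (t : Finset ι) {f : ι → RatFunc ℝ} {s : ℂ}
    (hf : ∀ i ∈ t, ¬ IsPoleAt (f i) s) : ¬ IsPoleAt (∑ i ∈ t, f i) s := by
  classical
  induction t using Finset.induction_on with
  | empty => simpa using np_zero s
  | insert a t ha ih =>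
    rw [Finset.sum_insert ha]
    exact np_add (hf a (by simp)) (ih fun i hi => hf i (by simp [hi]))

lemma evalC_add {f g : RatFunc ℝ} {s : ℂ} (hf : ¬ IsPoleAt f s) (hg : ¬ IsPoleAt g s) :
    evalC (f + g) s = evalC f s + evalC g s := RatFunc.eval_add _ _ hf hg

lemma evalC_mul {f g : RatFunc ℝ} {s : ℂ} (hf : ¬ IsPoleAt f s) (hg : ¬ IsPoleAt g s) :
    evalC (f * g) s = evalC f s * evalC g s := RatFunc.eval_mul _ _ hf hg

lemma evalC_C (c : ℝ) (s : ℂ) : evalC (RatFunc.C c) s = c := by simp [evalC]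
lemma evalC_zero (s : ℂ) : evalC 0 s = 0 := by simp [evalC]
lemma evalC_one (s : ℂ) : evalC 1 s = 1 := by simp [evalC]

lemma evalC_neg {f : RatFunc ℝ} {s : ℂ} (hf : ¬ IsPoleAt f s) : evalC (-f) s = - evalC f s := by
  have : -f = RatFunc.C (-1) * f := by simp
  rw [this, evalC_mul (np_C _ _) hf, evalC_C]; simp

lemma evalC_sub {f g : RatFunc ℝ} {s : ℂ} (hf : ¬ IsPoleAt f s) (hg : ¬ IsPoleAt g s) :
    evalC (f - g) s = evalC f s - evalC g s := by
  rw [sub_eq_add_neg, evalC_add hf (np_neg hg), evalC_neg hg, sub_eq_add_neg]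

lemma evalC_sum {ι : Type*} (t : Finset ι) {f : ι → RatFunc ℝ} {s : ℂ}
    (hf : ∀ i ∈ t, ¬ IsPoleAt (f i) s) : evalC (∑ i ∈ t, f i) s = ∑ i ∈ t, evalC (f i) s := by
  classical
  induction t using Finset.induction_on with
  | empty => simpa using evalC_zero s
  | insert a t ha ih =>
    rw [Finset.sum_insert ha, Finset.sum_insert ha, evalC_add (hf a (by simp))
      (np_sum t fun i hi => hf i (by simp [hi])), ih fun i hi => hf i (by simp [hi])]

variable {n : ℕ}

/-- no pole at `s` -/
def NP (G : Matrix (Fin n) (Fin n) (RatFunc ℝ)) (s : ℂ) : Prop := ∀ i j, ¬ IsPoleAt (G i j) s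

lemma np_iff {G : Matrix (Fin n) (Fin n) (RatFunc ℝ)} {s : ℂ} : NP G s ↔ ¬ HasPole G s := by
  simp [NP, HasPole]

lemma NP.mul {G H : Matrix (Fin n) (Fin n) (RatFunc ℝ)} {s : ℂ} (hG : NP G s) (hH : NP H s) :
    NP (G * H) s := fun i j => by
  rw [Matrix.mul_apply]; exact np_sum _ fun k _ => np_mul (hG i k) (hH k j)

lemma NP.add {G H : Matrix (Fin n) (Fin n) (RatFunc ℝ)} {s : ℂ} (hG : NP G s) (hH : NP H s) :
    NP (G + H) s := fun i j => np_add (hG i j) (hH i j)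

lemma NP.sub {G H : Matrix (Fin n) (Fin n) (RatFunc ℝ)} {s : ℂ} (hG : NP G s) (hH : NP H s) :
    NP (G - H) s := fun i j => np_sub (hG i j) (hH i j)

lemma NP.scalar {f : RatFunc ℝ} {s : ℂ} (hf : ¬ IsPoleAt f s) :
    NP (f • (1 : Matrix (Fin n) (Fin n) (RatFunc ℝ))) s := fun i j => by
  by_cases h : i = j
  · subst h; simpa using hf
  · simpa [h] using np_zero s

lemma NP.one {s : ℂ} : NP (1 : Matrix (Fin n) (Fin n) (RatFunc ℝ)) s := by
  simpa using NP.scalar (n := n) (np_one s)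

lemma evalM_mul {G H : Matrix (Fin n) (Fin n) (RatFunc ℝ)} {s : ℂ} (hG : NP G s) (hH : NP H s) :
    evalM (G * H) s = evalM G s * evalM H s := by
  ext i j
  simp only [evalM, Matrix.of_apply, Matrix.mul_apply]
  rw [evalC_sum _ fun k _ => np_mul (hG i k) (hH k j)]
  exact Finset.sum_congr rfl fun k _ => evalC_mul (hG i k) (hH k j)

lemma evalM_add {G H : Matrix (Fin n) (Fin n) (RatFunc ℝ)} {s : ℂ} (hG : NP G s) (hH : NP H s) :
    evalM (G + H) s = evalM G s + evalM H s := by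
  ext i j; exact evalC_add (hG i j) (hH i j)

lemma evalM_sub {G H : Matrix (Fin n) (Fin n) (RatFunc ℝ)} {s : ℂ} (hG : NP G s) (hH : NP H s) :
    evalM (G - H) s = evalM G s - evalM H s := by
  ext i j; exact evalC_sub (hG i j) (hH i j)

lemma evalM_scalar (f : RatFunc ℝ) (s : ℂ) :
    evalM (f • (1 : Matrix (Fin n) (Fin n) (RatFunc ℝ))) s = evalC f s • 1 := by
  ext i j
  by_cases h : i = j
  · subst h; simp [evalM]
  · simp [evalM, h, evalC_zero]

lemma evalM_one (s : ℂ) : evalM (1 : Matrix (Fin n) (Fin n) (RatFunc ℝ)) s = 1 := by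
  simpa [evalC_one] using evalM_scalar (n := n) 1 s

lemma eval₂_conj (p : ℝ[X]) (s : ℂ) :
    p.eval₂ (algebraMap ℝ ℂ) (star s) = star (p.eval₂ (algebraMap ℝ ℂ) s) := by
  have := Polynomial.hom_eval₂ p (algebraMap ℝ ℂ) (starRingEnd ℂ) s
  have h2 : (starRingEnd ℂ).comp (algebraMap ℝ ℂ) = algebraMap ℝ ℂ := by
    ext x; simp
  rw [h2] at this
  exact this.symm

lemma evalC_conj (f : RatFunc ℝ) (s : ℂ) : evalC f (star s) = star (evalC f s) := by
  unfold evalC RatFunc.eval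
  rw [eval₂_conj, eval₂_conj, star_div₀]

lemma isPoleAt_conj {f : RatFunc ℝ} {s : ℂ} : IsPoleAt f (star s) ↔ IsPoleAt f s := by
  unfold IsPoleAt
  rw [eval₂_conj, star_eq_zero]

lemma jw_neg (ω : ℝ) : jw (-ω) = star (jw ω) := by
  simp [jw]

lemma evalM_conj (G : Matrix (Fin n) (Fin n) (RatFunc ℝ)) (s : ℂ) :
    evalM G (star s) = (evalM G s).map star := by
  ext i j; exact evalC_conj _ _

lemma evalC_ofReal (f : RatFunc ℝ) (x : ℝ) :
    evalC f (x : ℂ) = ((f.eval (RingHom.id ℝ) x : ℝ) : ℂ) := by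
  have h : ∀ p : ℝ[X], p.eval₂ (algebraMap ℝ ℂ) (x : ℂ) = ((p.eval₂ (RingHom.id ℝ) x : ℝ) : ℂ) := by
    intro p
    have := Polynomial.hom_eval₂ p (RingHom.id ℝ) (algebraMap ℝ ℂ) x
    simpa using this.symm
  unfold evalC RatFunc.eval
  rw [h, h]; simp

lemma evalM_zero_eq (G : Matrix (Fin n) (Fin n) (RatFunc ℝ)) :
    evalM G 0 = (evalR G 0).map Complex.ofReal := by
  ext i j
  have := evalC_ofReal (G i j) 0
  simpa [evalM, evalR] using this

lemma eventually_np {l : Filter ℂ} (hl : l ≤ cofinite) (f : RatFunc ℝ) :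
    ∀ᶠ s in l, ¬ IsPoleAt f s := by
  apply hl
  have h0 : f.denom.map (algebraMap ℝ ℂ) ≠ 0 := by
    simpa using (Polynomial.map_ne_zero_iff (algebraMap ℝ ℂ).injective).mpr f.denom_ne_zero
  have := Polynomial.eventually_cofinite_not_isRoot h0
  filter_upwards [this] with s hs
  simpa [IsPoleAt, Polynomial.IsRoot, Polynomial.eval_map] using hs

lemma eventually_NP {l : Filter ℂ} (hl : l ≤ cofinite) (G : Matrix (Fin n) (Fin n) (RatFunc ℝ)) :
    ∀ᶠ s in l, NP G s := by
  unfold NP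
  rw [Filter.eventually_all]; intro i
  rw [Filter.eventually_all]; intro j
  exact eventually_np hl _

lemma continuous_eval₂' (p : ℝ[X]) : Continuous fun s : ℂ => p.eval₂ (algebraMap ℝ ℂ) s := by
  simp only [Polynomial.eval₂_eq_eval_map]
  exact Polynomial.continuous _

lemma continuousAt_evalC {f : RatFunc ℝ} {s : ℂ} (hf : ¬ IsPoleAt f s) :
    ContinuousAt (evalC f) s := by
  unfold evalC RatFunc.eval
  exact (continuous_eval₂' _).continuousAt.div (continuous_eval₂' _).continuousAt hf

lemma continuousAt_evalM {G : Matrix (Fin n) (Fin n) (RatFunc ℝ)} {s : ℂ} (hG : NP G s) :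
    ContinuousAt (evalM G) s := by
  refine continuousAt_pi.mpr fun i => continuousAt_pi.mpr fun j => continuousAt_evalC (hG i j)

/-- A rational function that stays bounded along a filter converging to `s₀` has no pole there. -/
lemma np_of_bdd {l : Filter ℂ} [l.NeBot] {s₀ : ℂ} (hl : l ≤ 𝓝[≠] s₀) {f : RatFunc ℝ}
    {K : ℝ} (hb : ∀ᶠ s in l, ‖evalC f s‖ ≤ K) : ¬ IsPoleAt f s₀ := by
  intro hp
  have hc : l ≤ cofinite := hl.trans (by
    exact nhdsNE_le_cofinite s₀)
  have hn : l ≤ 𝓝 s₀ := hl.trans nhdsWithin_le_nhds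
  have h1 : ∀ᶠ s in l, ‖f.num.eval₂ (algebraMap ℝ ℂ) s‖ ≤ K * ‖f.denom.eval₂ (algebraMap ℝ ℂ) s‖ := by
    filter_upwards [hb, eventually_np hc f] with s hs hs2
    have h3 : 0 < ‖f.denom.eval₂ (algebraMap ℝ ℂ) s‖ := norm_pos_iff.mpr hs2
    unfold evalC RatFunc.eval at hs
    rw [norm_div, div_le_iff₀ h3] at hs
    exact hs
  have t1 : Tendsto (fun s => ‖f.num.eval₂ (algebraMap ℝ ℂ) s‖) l
      (𝓝 ‖f.num.eval₂ (algebraMap ℝ ℂ) s₀‖) :=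
    ((continuous_eval₂' f.num).norm.tendsto s₀).mono_left hn
  have t2 : Tendsto (fun s => K * ‖f.denom.eval₂ (algebraMap ℝ ℂ) s‖) l
      (𝓝 (K * ‖f.denom.eval₂ (algebraMap ℝ ℂ) s₀‖)) :=
    (((continuous_eval₂' f.denom).norm.tendsto s₀).mono_left hn).const_mul K
  have h4 := le_of_tendsto_of_tendsto t1 t2 h1
  unfold IsPoleAt at hp
  rw [hp] at h4
  have h5 : f.num.eval₂ (algebraMap ℝ ℂ) s₀ = 0 := by
    simpa using h4
  obtain ⟨a, b, hab⟩ := f.isCoprime_num_denom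
  have := congrArg (fun p => p.eval₂ (algebraMap ℝ ℂ) s₀) hab
  simp [Polynomial.eval₂_add, Polynomial.eval₂_mul, h5, hp] at this

/-- real points tending to infinity -/
def lInf : Filter ℂ := Filter.map (fun x : ℝ => (x : ℂ)) atTop

instance : lInf.NeBot := by unfold lInf; infer_instance

lemma lInf_le : lInf ≤ cofinite := by
  unfold lInf
  exact (Filter.map_mono atTop_le_cofinite).trans
    (Complex.ofReal_injective.tendsto_cofinite)

lemma proper_of_bdd {f : RatFunc ℝ} {K : ℝ} (hb : ∀ᶠ s in lInf, ‖evalC f s‖ ≤ K) :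
    f.num.degree ≤ f.denom.degree := by
  by_contra h
  push Not at h
  have t := Polynomial.abs_div_tendsto_atTop_atTop_of_degree_gt f.num f.denom h f.denom_ne_zero
  unfold lInf at hb
  rw [Filter.eventually_map] at hb
  obtain ⟨x, h1, h2⟩ := ((t.eventually_gt_atTop K).and hb).exists
  rw [evalC_ofReal] at h2
  simp only [RatFunc.eval, Complex.norm_real, Real.norm_eq_abs] at h2
  simp only [Polynomial.eval₂_id] at h2
  linarith

lemma tendsto_atInfinity {f : RatFunc ℝ} (hf : f.num.degree ≤ f.denom.degree) :
    Tendsto (evalC f) lInf (𝓝 ((atInfinity f : ℝ) : ℂ)) := by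
  unfold lInf
  rw [Filter.tendsto_map'_iff]
  have h : Tendsto (fun x : ℝ => f.eval (RingHom.id ℝ) x) atTop (𝓝 (atInfinity f)) := by
    unfold atInfinity RatFunc.eval
    simp only [Polynomial.eval₂_id]
    split_ifs with h
    · exact Polynomial.div_tendsto_atTop_leadingCoeff_div_of_degree_eq _ _ h
    · exact Polynomial.div_tendsto_atTop_zero_of_degree_lt _ _ (lt_of_le_of_ne hf h)
  have h2 := (Complex.continuous_ofReal.tendsto _).comp h
  refine h2.congr fun x => ?_
  simp [evalC_ofReal]

lemma tendsto_evalInf {G : Matrix (Fin n) (Fin n) (RatFunc ℝ)} (hG : Proper G) :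
    Tendsto (evalM G) lInf (𝓝 ((evalInf G).map Complex.ofReal)) := by
  refine tendsto_pi_nhds.mpr fun i => tendsto_pi_nhds.mpr fun j => ?_
  exact tendsto_atInfinity (hG i j)

/-! ### Part 2: positive-real lemma for scalar rational functions -/

lemma jw_mul (ω : ℝ) : jw ω = (ω : ℂ) * Complex.I := by simp [jw, mul_comm]

lemma jw_re (ω : ℝ) : (jw ω).re = 0 := by simp [jw]
lemma jw_im (ω : ℝ) : (jw ω).im = ω := by simp [jw]
lemma jw_inj {a b : ℝ} (h : jw a = jw b) : a = b := by
  have := congrArg Complex.im h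
  simpa [jw_im] using this

lemma continuous_jw : Continuous jw := by unfold jw; fun_prop

lemma eq_jw {s : ℂ} (h : s.re = 0) : s = jw s.im := by
  apply Complex.ext <;> simp [jw, h]

lemma pr_base (N D : ℂ[X]) (hD : ∀ s : ℂ, 0 ≤ s.re → D.eval s ≠ 0) (hdeg : N.degree ≤ D.degree)
    (hax : ∀ᶠ ω : ℝ in cofinite, 0 ≤ (N.eval (jw ω) / D.eval (jw ω)).re) {s : ℂ} (hs : 0 ≤ s.re) :
    0 ≤ (N.eval s / D.eval s).re := by
  have hcont : ∀ s : ℂ, 0 ≤ s.re → ContinuousAt (fun s => N.eval s / D.eval s) s := fun s hs =>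
    (Polynomial.continuous _).continuousAt.div (Polynomial.continuous _).continuousAt (hD s hs)
  -- boundary
  have hax' : ∀ ω : ℝ, 0 ≤ (N.eval (jw ω) / D.eval (jw ω)).re := by
    intro ω
    have h1 : ∀ᶠ w in 𝓝[≠] ω, 0 ≤ (N.eval (jw w) / D.eval (jw w)).re :=
      (nhdsNE_le_cofinite ω) hax
    have h2 : Tendsto (fun w => (N.eval (jw w) / D.eval (jw w)).re) (𝓝[≠] ω)
        (𝓝 (N.eval (jw ω) / D.eval (jw ω)).re) := by
      refine Tendsto.mono_left ?_ nhdsWithin_le_nhds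
      have := (hcont (jw ω) (by simp [jw_re])).comp (f := jw) (x := ω) continuous_jw.continuousAt
      exact (Complex.continuous_re.continuousAt.comp this)
    exact ge_of_tendsto h2 h1
  -- bounded at infinity
  have hO := Polynomial.isBigO_cobounded_of_degree_le (R := ℂ) (P := N) (Q := D) hdeg
  obtain ⟨K, hK⟩ := hO.bound
  have hb : ∀ᶠ z in Bornology.cobounded ℂ ⊓ 𝓟 {z : ℂ | 0 < z.re},
      ‖Complex.exp (-(N.eval z / D.eval z))‖ ≤ Real.exp K := by
    rw [Filter.eventually_inf_principal]
    filter_upwards [hK] with z hz hz2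
    rw [Complex.norm_exp]
    apply Real.exp_le_exp.mpr
    have h3 : 0 < ‖D.eval z‖ := norm_pos_iff.mpr (hD z (le_of_lt hz2))
    have h4 : ‖N.eval z / D.eval z‖ ≤ K := by
      rw [norm_div, div_le_iff₀ h3]; exact hz
    have h5 := Complex.abs_re_le_norm (N.eval z / D.eval z)
    have h6 := neg_abs_le (N.eval z / D.eval z).re
    simp only [Complex.neg_re]
    linarith
  have key := PhragmenLindelof.right_half_plane_of_bounded_on_real (C := 1) (z := s)
    (f := fun z => Complex.exp (-(N.eval z / D.eval z))) ?_ ?_ ?_ ?_ hs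
  · rw [Complex.norm_exp, ← Real.exp_zero, Real.exp_le_exp] at key
    simpa using key
  · have hd : DifferentiableOn ℂ (fun z => Complex.exp (-(N.eval z / D.eval z)))
        {z : ℂ | 0 < z.re} := by
      intro z hz
      apply DifferentiableAt.differentiableWithinAt
      exact (((N.differentiable z).div (D.differentiable z) (hD z (le_of_lt hz))).neg).cexp
    refine ⟨hd, ?_⟩
    intro z hz
    have : 0 ≤ z.re := by
      have h := closure_mono (s := {z : ℂ | 0 < z.re}) (t := {z : ℂ | 0 ≤ z.re})
        (fun z (hz : 0 < z.re) => show 0 ≤ z.re from le_of_lt hz) hz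
      rwa [IsClosed.closure_eq (isClosed_le continuous_const Complex.continuous_re)] at h
    exact ((hcont z this).neg.cexp).continuousWithinAt
  · refine ⟨1, by norm_num, 0, ?_⟩
    refine Asymptotics.IsBigO.of_bound (Real.exp K) ?_
    filter_upwards [hb] with z hz
    simpa using hz
  · refine ⟨Real.exp K, ?_⟩
    rw [Filter.eventually_map]
    have ht : Tendsto (fun x : ℝ => (x : ℂ)) atTop
        (Bornology.cobounded ℂ ⊓ 𝓟 {z : ℂ | 0 < z.re}) := by
      rw [tendsto_inf]
      constructor
      · rw [← tendsto_norm_atTop_iff_cobounded]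
        simp only [Complex.norm_real]
        exact tendsto_norm_atTop_atTop
      · rw [tendsto_principal]
        filter_upwards [eventually_gt_atTop 0] with x hx
        simpa using hx
    exact ht.eventually hb
  · intro x
    have := hax' x
    rw [jw_mul] at this
    rw [Complex.norm_exp, ← Real.exp_zero, Real.exp_le_exp]
    simpa using this

lemma pr_lemma : ∀ (d : ℕ) (N D : ℂ[X]), D.natDegree = d → D ≠ 0 →
    (∀ s : ℂ, 0 < s.re → D.eval s ≠ 0) → N.degree ≤ D.degree →
    (∀ᶠ ω : ℝ in cofinite, 0 ≤ (N.eval (jw ω) / D.eval (jw ω)).re) →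
    (∀ ω : ℝ, D.eval (jw ω) = 0 → ∃ r : ℝ, 0 ≤ r ∧
      Tendsto (fun s => (s - jw ω) * (N.eval s / D.eval s)) (𝓝[≠] jw ω) (𝓝 (r : ℂ))) →
    ∀ s : ℂ, 0 < s.re → 0 ≤ (N.eval s / D.eval s).re := by
  intro d
  induction d with
  | zero =>
    intro N D hd hD0 hD hdeg hax _ s hs
    refine pr_base N D ?_ hdeg hax hs.le
    intro s _
    obtain ⟨c, hc⟩ := Polynomial.natDegree_eq_zero.mp hd
    rw [← hc]
    simp only [Polynomial.eval_C]
    rintro rfl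
    exact hD0 (by rw [← hc]; simp)
  | succ d ih =>
    intro N D hd hD0 hD hdeg hax hres s hs
    by_cases hroot : ∃ ω : ℝ, D.eval (jw ω) = 0
    swap
    · push Not at hroot
      refine pr_base N D ?_ hdeg hax hs.le
      intro s hs
      rcases hs.lt_or_eq with h | h
      · exact hD s h
      · rw [eq_jw h.symm]; exact hroot _
    obtain ⟨ω, hω⟩ := hroot
    obtain ⟨r, hr, hlim⟩ := hres ω hω
    obtain ⟨D1, rfl⟩ := Polynomial.dvd_iff_isRoot.mpr hω
    have hD1 : D1 ≠ 0 := right_ne_zero_of_mul hD0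
    have hXne : (X - Polynomial.C (jw ω) : ℂ[X]) ≠ 0 := Polynomial.X_sub_C_ne_zero _
    have hev : ∀ᶠ s in 𝓝[≠] jw ω, D1.eval s ≠ 0 :=
      nhdsNE_le_cofinite _ (Polynomial.eventually_cofinite_not_isRoot hD1)
    have hvan : (N - Polynomial.C (r : ℂ) * D1).eval (jw ω) = 0 := by
      have t1 : Tendsto (fun s => (s - jw ω) * (N.eval s / ((X - Polynomial.C (jw ω)) * D1).eval s)
          * D1.eval s) (𝓝[≠] jw ω) (𝓝 (r * D1.eval (jw ω))) :=
        hlim.mul ((D1.continuous.tendsto _).mono_left nhdsWithin_le_nhds)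
      have t2 : Tendsto (fun s => N.eval s) (𝓝[≠] jw ω) (𝓝 (N.eval (jw ω))) :=
        (N.continuous.tendsto _).mono_left nhdsWithin_le_nhds
      have t3 := t2.congr' (f₂ := fun s => (s - jw ω) * (N.eval s / ((X - Polynomial.C (jw ω)) * D1).eval s)
          * D1.eval s) (by
        filter_upwards [hev, self_mem_nhdsWithin] with s h1 h2
        have h3 : s - jw ω ≠ 0 := sub_ne_zero.mpr h2
        simp only [Polynomial.eval_mul, Polynomial.eval_sub, Polynomial.eval_X, Polynomial.eval_C]
        field_simp)
      have := tendsto_nhds_unique t3 t1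
      simp [this]
    obtain ⟨N1, hN1⟩ := Polynomial.dvd_iff_isRoot.mpr hvan
    have hNeq : N = (X - Polynomial.C (jw ω)) * N1 + Polynomial.C (r : ℂ) * D1 := by
      rw [← hN1]; ring
    have hfeq : ∀ z : ℂ, z ≠ jw ω → D1.eval z ≠ 0 →
        N.eval z / ((X - Polynomial.C (jw ω)) * D1).eval z
          = N1.eval z / D1.eval z + r / (z - jw ω) := by
      intro z h1 h2
      have h3 : z - jw ω ≠ 0 := sub_ne_zero.mpr h1
      rw [hNeq]
      simp only [Polynomial.eval_mul, Polynomial.eval_sub, Polynomial.eval_X, Polynomial.eval_C,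
        Polynomial.eval_add]
      field_simp
    have hdegmul : ((X - Polynomial.C (jw ω)) * D1).natDegree = 1 + D1.natDegree := by
      rw [Polynomial.natDegree_mul hXne hD1, Polynomial.natDegree_X_sub_C]
    have hD1root : ∀ s : ℂ, 0 < s.re → D1.eval s ≠ 0 := fun s hs h =>
      hD s hs (by simp [h])
    have key := ih N1 D1 (by omega) hD1 hD1root ?_ ?_ ?_ s hs
    · have hne : s ≠ jw ω := by
        rintro rfl
        simp [jw_re] at hs
      rw [hfeq s hne (hD1root s hs), Complex.add_re]
      have : 0 ≤ ((r : ℂ) / (s - jw ω)).re := by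
        rw [Complex.div_re]
        simp only [Complex.ofReal_re, Complex.sub_re, jw_re, sub_zero, Complex.ofReal_im, zero_mul,
          zero_div, add_zero]
        have := Complex.normSq_nonneg (s - jw ω)
        positivity
      linarith
    · have h1 : ((X - Polynomial.C (jw ω)) * N1).degree ≤ ((X - Polynomial.C (jw ω)) * D1).degree := by
        rw [← hN1]
        refine (Polynomial.degree_sub_le _ _).trans (max_le hdeg ?_)
        rw [← Polynomial.smul_eq_C_mul]
        refine (Polynomial.degree_smul_le _ _).trans ?_
        rw [Polynomial.degree_mul, Polynomial.degree_X_sub_C, Polynomial.degree_eq_natDegree hD1]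
        norm_cast; omega
      rw [Polynomial.degree_mul, Polynomial.degree_mul, Polynomial.degree_X_sub_C] at h1
      by_cases hN0 : N1 = 0
      · simp [hN0]
      rw [Polynomial.degree_eq_natDegree hN0, Polynomial.degree_eq_natDegree hD1] at h1 ⊢
      norm_cast at h1 ⊢
      omega
    · have hfin : ∀ᶠ w : ℝ in cofinite, w ≠ ω := by
        simp [Filter.eventually_cofinite]
      have hfin2 : ∀ᶠ w : ℝ in cofinite, D1.eval (jw w) ≠ 0 :=
        (Function.Injective.tendsto_cofinite (f := jw) fun a b h => jw_inj h).eventually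
          (Polynomial.eventually_cofinite_not_isRoot hD1)
      filter_upwards [hax, hfin, hfin2] with w h1 h2 h3
      rw [hfeq _ (fun h => h2 (jw_inj h)) h3, Complex.add_re] at h1
      have : ((r : ℂ) / (jw w - jw ω)).re = 0 := by
        rw [Complex.div_re]; simp [jw_re]
      linarith
    · intro w hw
      have hw' : ((X - Polynomial.C (jw ω)) * D1).eval (jw w) = 0 := by simp [hw]
      have hev : ∀ᶠ s in 𝓝[≠] jw w, D1.eval s ≠ 0 :=
        nhdsNE_le_cofinite _ (Polynomial.eventually_cofinite_not_isRoot hD1)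
      have hev2 : ∀ᶠ s in 𝓝[≠] jw w, s ≠ jw ω :=
        nhdsNE_le_cofinite _ (by simp)
      obtain ⟨r', hr', hlim'⟩ := hres w hw'
      by_cases hww : w = ω
      · subst hww
        refine ⟨0, le_rfl, ?_⟩
        have := hlim.sub_const (r : ℂ)
        rw [sub_self] at this
        simp only [Complex.ofReal_zero]
        refine this.congr' ?_
        filter_upwards [hev, hev2] with z h1 h2
        have h3 : z - jw w ≠ 0 := sub_ne_zero.mpr h2
        rw [hfeq z h2 h1]; field_simp; ring
      · refine ⟨r', hr', ?_⟩
        have hne : jw w - jw ω ≠ 0 := sub_ne_zero.mpr fun h => hww (jw_inj h)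
        have t0 : Tendsto (fun z => (z - jw w) * (r / (z - jw ω))) (𝓝[≠] jw w)
            (𝓝 ((jw w - jw w) * (r / (jw w - jw ω)))) := by
          refine Tendsto.mono_left ?_ nhdsWithin_le_nhds
          have : ContinuousAt (fun z => (z - jw w) * (r / (z - jw ω))) (jw w) := by
            refine ContinuousAt.mul (by fun_prop) ?_
            exact ContinuousAt.div (by fun_prop) (by fun_prop) hne
          exact this
        rw [sub_self, zero_mul] at t0
        have := hlim'.sub t0
        rw [sub_zero] at this
        refine this.congr' ?_
        filter_upwards [hev, hev2] with z h1 h2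
        rw [hfeq z h2 h1]; ring

/-! ### Part 3: scalar negative-imaginary functions -/

/-- `f` is given by a proper complex rational function with poles in `S` and value `c` at `∞`. -/
def PropRat (f : ℂ → ℂ) (S : Set ℂ) (c : ℂ) : Prop :=
  ∃ N D : ℂ[X], D ≠ 0 ∧ (N - Polynomial.C c * D).degree < D.degree ∧
    (∀ s, D.eval s = 0 → s ∈ S) ∧ ∀ s, s ∉ S → f s = N.eval s / D.eval s

lemma PropRat.add {f g : ℂ → ℂ} {S : Set ℂ} {c d : ℂ} (hf : PropRat f S c) (hg : PropRat g S d) :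
    PropRat (fun s => f s + g s) S (c + d) := by
  obtain ⟨N1, D1, h1, h2, h3, h4⟩ := hf
  obtain ⟨N2, D2, k1, k2, k3, k4⟩ := hg
  refine ⟨N1 * D2 + N2 * D1, D1 * D2, mul_ne_zero h1 k1, ?_, ?_, ?_⟩
  · have : N1 * D2 + N2 * D1 - Polynomial.C (c + d) * (D1 * D2)
      = (N1 - Polynomial.C c * D1) * D2 + (N2 - Polynomial.C d * D2) * D1 := by
      rw [Polynomial.C_add]; ring
    rw [this]
    have hb1 : D1.degree ≠ ⊥ := by simpa using h1
    have hb2 : D2.degree ≠ ⊥ := by simpa using k1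
    refine lt_of_le_of_lt (Polynomial.degree_add_le _ _) (max_lt ?_ ?_)
    · by_cases h0 : N1 - Polynomial.C c * D1 = 0
      · rw [h0, zero_mul]
        simpa [bot_lt_iff_ne_bot] using And.intro h1 k1
      · rw [Polynomial.degree_mul, Polynomial.degree_mul]
        rw [Polynomial.degree_eq_natDegree h0, Polynomial.degree_eq_natDegree h1] at h2
        rw [Polynomial.degree_eq_natDegree h0, Polynomial.degree_eq_natDegree h1,
          Polynomial.degree_eq_natDegree k1]
        norm_cast at h2 ⊢
        omega
    · by_cases h0 : N2 - Polynomial.C d * D2 = 0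
      · rw [h0, zero_mul]
        simpa [bot_lt_iff_ne_bot] using And.intro h1 k1
      · rw [Polynomial.degree_mul, Polynomial.degree_mul]
        rw [Polynomial.degree_eq_natDegree h0, Polynomial.degree_eq_natDegree k1] at k2
        rw [Polynomial.degree_eq_natDegree h0, Polynomial.degree_eq_natDegree h1,
          Polynomial.degree_eq_natDegree k1]
        norm_cast at k2 ⊢
        omega
  · intro s hs
    rw [Polynomial.eval_mul] at hs
    rcases mul_eq_zero.mp hs with h | h
    exacts [h3 s h, k3 s h]
  · intro s hs
    have e1 : D1.eval s ≠ 0 := fun h => hs (h3 s h)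
    have e2 : D2.eval s ≠ 0 := fun h => hs (k3 s h)
    show f s + g s = _
    rw [h4 s hs, k4 s hs]
    simp only [Polynomial.eval_add, Polynomial.eval_mul]
    field_simp

lemma PropRat.const_mul {f : ℂ → ℂ} {S : Set ℂ} {c : ℂ} (a : ℂ) (hf : PropRat f S c) :
    PropRat (fun s => a * f s) S (a * c) := by
  obtain ⟨N1, D1, h1, h2, h3, h4⟩ := hf
  refine ⟨Polynomial.C a * N1, D1, h1, ?_, h3, ?_⟩
  · have : Polynomial.C a * N1 - Polynomial.C (a * c) * D1 = a • (N1 - Polynomial.C c * D1) := by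
      rw [Polynomial.C_mul, Polynomial.smul_eq_C_mul]; ring
    rw [this]
    exact lt_of_le_of_lt (Polynomial.degree_smul_le _ _) h2
  · intro s hs
    show a * f s = _
    rw [h4 s hs]; simp [mul_div_assoc]

lemma PropRat.zero (S : Set ℂ) : PropRat (fun _ => 0) S 0 :=
  ⟨0, 1, one_ne_zero, by simp, by simp, by simp⟩

lemma PropRat.sum {ι : Type*} (t : Finset ι) {f : ι → ℂ → ℂ} {S : Set ℂ} {c : ι → ℂ}
    (hf : ∀ i ∈ t, PropRat (f i) S (c i)) :
    PropRat (fun s => ∑ i ∈ t, f i s) S (∑ i ∈ t, c i) := by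
  classical
  induction t using Finset.induction_on with
  | empty => simpa using PropRat.zero S
  | insert a t ha ih =>
    simp only [Finset.sum_insert ha]
    exact (hf a (by simp)).add (ih fun i hi => hf i (by simp [hi]))

lemma propRat_evalC {f : RatFunc ℝ} (hf : f.num.degree ≤ f.denom.degree) {S : Set ℂ}
    (hS : ∀ s, IsPoleAt f s → s ∈ S) : PropRat (evalC f) S (atInfinity f : ℝ) := by
  refine ⟨f.num.map (algebraMap ℝ ℂ), f.denom.map (algebraMap ℝ ℂ), ?_, ?_, ?_, ?_⟩
  · simpa using (Polynomial.map_ne_zero_iff (algebraMap ℝ ℂ).injective).mpr f.denom_ne_zero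
  · have : f.num.map (algebraMap ℝ ℂ) - Polynomial.C ((atInfinity f : ℝ) : ℂ) *
      f.denom.map (algebraMap ℝ ℂ)
      = (f.num - Polynomial.C (atInfinity f) * f.denom).map (algebraMap ℝ ℂ) := by
      simp
    rw [this, Polynomial.degree_map, Polynomial.degree_map]
    unfold atInfinity
    split_ifs with h
    · by_cases h0 : f.num = 0
      · rw [h0] at h
        have := f.denom_ne_zero
        simp at h
        exact absurd (Polynomial.degree_eq_bot.mp h.symm) this
      · rw [← h]
        have hl : f.denom.leadingCoeff ≠ 0 := by simpa using f.denom_ne_zero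
        have hl' : f.num.leadingCoeff ≠ 0 := by simpa using h0
        refine Polynomial.degree_sub_lt_left ?_ h0 ?_
        · rw [Polynomial.degree_C_mul (div_ne_zero hl' hl), h]
        · rw [Polynomial.leadingCoeff_mul, Polynomial.leadingCoeff_C]
          field_simp
    · simpa using lt_of_le_of_ne hf h
  · intro s hs
    apply hS
    simpa [IsPoleAt, Polynomial.eval_map] using hs
  · intro s _
    simp [evalC, RatFunc.eval, Polynomial.eval_map]

lemma propRat_quad {n : ℕ} {G : Matrix (Fin n) (Fin n) (RatFunc ℝ)} (hG : Proper G)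
    (u : Fin n → ℂ) :
    PropRat (fun s => star u ⬝ᵥ (evalM G s *ᵥ u)) {s | HasPole G s}
      (star u ⬝ᵥ ((evalInf G).map Complex.ofReal *ᵥ u)) := by
  simp only [dotProduct, mulVec]
  apply PropRat.sum
  intro i _
  apply PropRat.const_mul
  apply PropRat.sum
  intro j _
  have := (propRat_evalC (hG i j) (S := {s | HasPole G s}) fun s hs => ⟨i, j, hs⟩).const_mul (u j)
  simpa [evalM, evalInf, mul_comm] using this

lemma finite_poles {n : ℕ} (G : Matrix (Fin n) (Fin n) (RatFunc ℝ)) :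
    {s | HasPole G s}.Finite := by
  have := eventually_NP le_rfl G
  rw [Filter.eventually_cofinite] at this
  refine this.subset fun s hs => ?_
  simpa [np_iff] using hs

/-- Scalar negative imaginary data. -/
structure SNIData (f : ℂ → ℂ) (S : Set ℂ) (c : ℂ) : Prop where
  rat : PropRat f S c
  fin : S.Finite
  orhp : ∀ s ∈ S, ¬ 0 < s.re
  zero : (0 : ℂ) ∉ S
  axis : ∀ ω : ℝ, ω ≠ 0 → jw ω ∉ S → ω * (f (jw ω)).im ≤ 0
  res : ∀ ω : ℝ, ω ≠ 0 → jw ω ∈ S → ∃ r : ℝ, 0 ≤ r ∧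
    Tendsto (fun s => (s - jw ω) * (Complex.I * ω * f s)) (𝓝[≠] jw ω) (𝓝 (r : ℂ))

lemma SNIData.axis_ev {f : ℂ → ℂ} {S : Set ℂ} {c : ℂ} (h : SNIData f S c) :
    ∀ᶠ ω : ℝ in cofinite, ω ≠ 0 ∧ jw ω ∉ S := by
  have h1 : ∀ᶠ ω : ℝ in cofinite, ω ≠ 0 := by simp
  have h2 : ∀ᶠ ω : ℝ in cofinite, jw ω ∉ S :=
    (Function.Injective.tendsto_cofinite (f := jw) fun a b h => jw_inj h).eventually
      h.fin.compl_mem_cofinite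
  exact h1.and h2

lemma SNIData.upper {f : ℂ → ℂ} {S : Set ℂ} {c : ℂ} (h : SNIData f S c) (hc : c.im = 0) {s : ℂ}
    (hs : 0 < s.re) : 0 ≤ (s * (f s - c)).re := by
  obtain ⟨N, D, h1, h2, h3, h4⟩ := h.rat
  have hval : ∀ z, z ∉ S → (X * (N - Polynomial.C c * D)).eval z / D.eval z = z * (f z - c) := by
    intro z hz
    have : D.eval z ≠ 0 := fun h => hz (h3 z h)
    rw [h4 z hz]
    simp; field_simp
  have hsS : s ∉ S := fun hh => h.orhp s hh hs
  rw [← hval s hsS]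
  refine pr_lemma _ (X * (N - Polynomial.C c * D)) D rfl h1 (fun z hz h0 => h.orhp z (h3 z h0) hz)
    ?_ ?_ ?_ s hs
  · by_cases h0 : N - Polynomial.C c * D = 0
    · simp [h0]
    · rw [Polynomial.degree_mul, Polynomial.degree_X]
      rw [Polynomial.degree_eq_natDegree h0, Polynomial.degree_eq_natDegree h1] at h2 ⊢
      norm_cast at h2 ⊢
      omega
  · filter_upwards [h.axis_ev] with ω hω
    rw [hval _ hω.2]
    have := h.axis ω hω.1 hω.2
    rw [Complex.mul_re, jw_re, jw_im, Complex.sub_im, hc]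
    linarith
  · intro ω hω
    have hm := h3 _ hω
    have hω0 : ω ≠ 0 := by
      rintro rfl
      exact h.zero (by simpa [jw] using hm)
    obtain ⟨r, hr, hl⟩ := h.res ω hω0 hm
    refine ⟨r, hr, ?_⟩
    have hne : Complex.I * (ω : ℂ) ≠ 0 := mul_ne_zero Complex.I_ne_zero (by exact_mod_cast hω0)
    have t1 : Tendsto (fun z : ℂ => z / (Complex.I * ω)) (𝓝[≠] jw ω) (𝓝 (jw ω / (Complex.I * ω))) :=
      (by fun_prop : Continuous fun z : ℂ => z / (Complex.I * ω)).tendsto _ |>.mono_left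
        nhdsWithin_le_nhds
    have t2 : Tendsto (fun z : ℂ => (z - jw ω) * z * c) (𝓝[≠] jw ω)
        (𝓝 ((jw ω - jw ω) * jw ω * c)) :=
      (by fun_prop : Continuous fun z : ℂ => (z - jw ω) * z * c).tendsto _ |>.mono_left
        nhdsWithin_le_nhds
    have t3 := (hl.mul t1).sub t2
    have e : (r : ℂ) * (jw ω / (Complex.I * ω)) - (jw ω - jw ω) * jw ω * c = r := by
      unfold jw; rw [div_self hne]; ring
    rw [e] at t3
    refine t3.congr' ?_
    filter_upwards [nhdsNE_le_cofinite _ h.fin.compl_mem_cofinite] with z hz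
    rw [hval z hz]
    field_simp

lemma SNIData.lower {f : ℂ → ℂ} {S : Set ℂ} {c : ℂ} (h : SNIData f S c) (hc : (f 0).im = 0) {s : ℂ}
    (hs : 0 < s.re) : 0 ≤ ((f 0 - f s) * star s).re := by
  obtain ⟨N, D, h1, h2, h3, h4⟩ := h.rat
  have hD0 : D.eval 0 ≠ 0 := fun hh => h.zero (h3 _ hh)
  have hf0 := h4 0 h.zero
  obtain ⟨N1, hN1⟩ : (X : ℂ[X]) ∣ Polynomial.C (f 0) * D - N := by
    rw [Polynomial.X_dvd_iff, Polynomial.coeff_zero_eq_eval_zero]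
    simp only [Polynomial.eval_sub, Polynomial.eval_mul, Polynomial.eval_C]
    rw [hf0]; field_simp; ring
  have hval : ∀ z, z ∉ S → z ≠ 0 → N1.eval z / D.eval z = (f 0 - f z) / z := by
    intro z hz hz0
    have hD : D.eval z ≠ 0 := fun h => hz (h3 z h)
    have h5 := congrArg (Polynomial.eval z) hN1
    simp only [Polynomial.eval_sub, Polynomial.eval_mul, Polynomial.eval_C, Polynomial.eval_X] at h5
    rw [h4 z hz]
    field_simp
    linear_combination -h5
  have hsS : s ∉ S := fun hh => h.orhp s hh hs
  have hs0 : s ≠ 0 := by rintro rfl; simp at hs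
  have key : 0 ≤ (N1.eval s / D.eval s).re := by
    refine pr_lemma _ N1 D rfl h1 (fun z hz h0 => h.orhp z (h3 z h0) hz) ?_ ?_ ?_ s hs
    · have hdN : (X * N1).degree ≤ D.degree := by
        have : X * N1 = (f 0 - c) • D - (N - Polynomial.C c * D) := by
          rw [← hN1, Polynomial.smul_eq_C_mul, Polynomial.C_sub]; ring
        rw [this]
        exact (Polynomial.degree_sub_le _ _).trans (max_le (Polynomial.degree_smul_le _ _) h2.le)
      refine le_trans ?_ hdN
      by_cases h0 : N1 = 0
      · simp [h0]
      · rw [Polynomial.degree_mul, Polynomial.degree_X, Polynomial.degree_eq_natDegree h0]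
        norm_cast; omega
    · filter_upwards [h.axis_ev] with ω hω
      have hne : jw ω ≠ 0 := fun hh => hω.1 (by simpa [jw_im] using congrArg Complex.im hh)
      rw [hval _ hω.2 hne]
      have := h.axis ω hω.1 hω.2
      rw [Complex.div_re, jw_re, jw_im, Complex.sub_im, hc]
      have h6 := Complex.normSq_nonneg (jw ω)
      have : 0 ≤ (0 - (f (jw ω)).im) * ω := by linarith
      have := div_nonneg this h6
      simpa using this
    · intro ω hω
      have hm := h3 _ hω
      have hω0 : ω ≠ 0 := by
        rintro rfl
        exact h.zero (by simpa [jw] using hm)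
      obtain ⟨r, hr, hl⟩ := h.res ω hω0 hm
      refine ⟨r / ω ^ 2, by positivity, ?_⟩
      have hω0' : (ω : ℂ) ≠ 0 := by exact_mod_cast hω0
      have hne : Complex.I * (ω : ℂ) ≠ 0 := mul_ne_zero Complex.I_ne_zero hω0'
      have hjne : jw ω ≠ 0 := hne
      have t1 : Tendsto (fun z : ℂ => -1 / (z * (Complex.I * ω))) (𝓝[≠] jw ω)
          (𝓝 (-1 / (jw ω * (Complex.I * ω)))) := by
        refine Tendsto.mono_left ?_ nhdsWithin_le_nhds
        exact ContinuousAt.div (by fun_prop) (by fun_prop) (mul_ne_zero hjne hne)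
      have t2 : Tendsto (fun z : ℂ => (z - jw ω) * (f 0 / z)) (𝓝[≠] jw ω)
          (𝓝 ((jw ω - jw ω) * (f 0 / jw ω))) := by
        refine Tendsto.mono_left ?_ nhdsWithin_le_nhds
        exact ContinuousAt.mul (by fun_prop) (ContinuousAt.div (by fun_prop) (by fun_prop) hjne)
      have t3 := (hl.mul t1).add t2
      have e : (r : ℂ) * (-1 / (jw ω * (Complex.I * ω))) + (jw ω - jw ω) * (f 0 / jw ω)
          = ((r / ω ^ 2 : ℝ) : ℂ) := by
        have : jw ω * (Complex.I * ω) = - (ω : ℂ) ^ 2 := by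
          unfold jw; linear_combination (ω : ℂ) ^ 2 * Complex.I_mul_I
        rw [this]; push_cast; field_simp; ring
      rw [e] at t3
      refine t3.congr' ?_
      have hev0 : ∀ᶠ z in 𝓝[≠] jw ω, z ≠ 0 :=
        nhdsNE_le_cofinite _ (by simp)
      filter_upwards [nhdsNE_le_cofinite _ h.fin.compl_mem_cofinite, hev0] with z hz hz0
      rw [hval z hz hz0]
      have := Complex.I_ne_zero
      field_simp
      ring
  rw [hval s hsS hs0] at key
  have e : (f 0 - f s) * star s = (Complex.normSq s : ℂ) * ((f 0 - f s) / s) := by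
    rw [Complex.normSq_eq_conj_mul_self]
    field_simp
    simp [mul_comm]
  rw [e, Complex.re_ofReal_mul]
  exact mul_nonneg (Complex.normSq_nonneg _) key


/-- quadratic form `u* M u` -/
def qf {n : ℕ} (M : Matrix (Fin n) (Fin n) ℂ) (u : Fin n → ℂ) : ℂ := star u ⬝ᵥ (M *ᵥ u)

/-- Euclidean norm of a complex vector -/
def en {n : ℕ} (u : Fin n → ℂ) : ℝ := ‖(WithLp.toLp 2 u : EuclideanSpace ℂ (Fin n))‖

/-- sum of absolute values of the entries -/
def sn {n : ℕ} (M : Matrix (Fin n) (Fin n) ℂ) : ℝ := ∑ i, ∑ j, ‖M i j‖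

lemma en_nonneg {n : ℕ} (u : Fin n → ℂ) : 0 ≤ en u := norm_nonneg _

lemma en_eq_zero {n : ℕ} {u : Fin n → ℂ} : en u = 0 ↔ u = 0 := by
  unfold en; rw [norm_eq_zero]; simp

lemma en_zero {n : ℕ} : en (0 : Fin n → ℂ) = 0 := en_eq_zero.mpr rfl

lemma en_pos {n : ℕ} {u : Fin n → ℂ} (h : u ≠ 0) : 0 < en u :=
  lt_of_le_of_ne (en_nonneg u) fun h' => h (en_eq_zero.mp h'.symm)

lemma en_add {n : ℕ} (u v : Fin n → ℂ) : en (u + v) ≤ en u + en v := by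
  unfold en; rw [WithLp.toLp_add]; exact norm_add_le _ _

lemma en_sub {n : ℕ} (u v : Fin n → ℂ) : en (u - v) ≤ en u + en v := by
  unfold en; rw [WithLp.toLp_sub]; exact norm_sub_le _ _

lemma en_smul {n : ℕ} (c : ℂ) (u : Fin n → ℂ) : en (c • u) = ‖c‖ * en u := by
  unfold en; rw [WithLp.toLp_smul]; exact norm_smul _ _

lemma en_sq {n : ℕ} (u : Fin n → ℂ) : en u ^ 2 = ∑ i, ‖u i‖ ^ 2 := by
  unfold en; rw [EuclideanSpace.norm_sq_eq]

lemma norm_le_en {n : ℕ} (u : Fin n → ℂ) (i : Fin n) : ‖u i‖ ≤ en u := by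
  unfold en
  exact PiLp.norm_apply_le (WithLp.toLp 2 u : EuclideanSpace ℂ (Fin n)) i

lemma en_le_sum {n : ℕ} (u : Fin n → ℂ) : en u ≤ ∑ i, ‖u i‖ := by
  have h0 : 0 ≤ ∑ i, ‖u i‖ := Finset.sum_nonneg fun i _ => norm_nonneg _
  refine (pow_le_pow_iff_left₀ (en_nonneg u) h0 two_ne_zero).mp ?_
  rw [en_sq]
  exact Finset.sum_sq_le_sq_sum_of_nonneg (fun i _ => norm_nonneg _)

lemma dot_self {n : ℕ} (u : Fin n → ℂ) : star u ⬝ᵥ u = ((en u ^ 2 : ℝ) : ℂ) := by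
  rw [en_sq]; simp only [dotProduct, Pi.star_apply]
  push_cast
  refine Finset.sum_congr rfl fun i _ => ?_
  simpa using Complex.conj_mul' (u i)

lemma norm_dot_le {n : ℕ} (u v : Fin n → ℂ) : ‖star u ⬝ᵥ v‖ ≤ en u * en v := by
  have := norm_inner_le_norm (𝕜 := ℂ) (WithLp.toLp 2 u : EuclideanSpace ℂ (Fin n)) (WithLp.toLp 2 v)
  rw [EuclideanSpace.inner_eq_star_dotProduct, dotProduct_comm] at this
  simpa [en] using this

lemma en_single {n : ℕ} (j : Fin n) : en (Pi.single j (1 : ℂ)) = 1 := by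
  have := en_sq (Pi.single j (1 : ℂ))
  have h : ∑ i, ‖(Pi.single j (1 : ℂ) : Fin n → ℂ) i‖ ^ 2 = 1 := by
    rw [Finset.sum_eq_single j]
    · simp
    · intro b _ hb; simp [Pi.single_eq_of_ne hb]
    · simp
  rw [h] at this
  nlinarith [en_nonneg (Pi.single j (1 : ℂ)), sq_nonneg (en (Pi.single j (1 : ℂ)) - 1)]

lemma entry_le {n : ℕ} (M : Matrix (Fin n) (Fin n) ℂ) (i j : Fin n) :
    ‖M i j‖ ≤ en (M *ᵥ Pi.single j 1) := by
  have := norm_le_en (M *ᵥ Pi.single j 1) i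
  simpa using this

lemma sn_nonneg {n : ℕ} (M : Matrix (Fin n) (Fin n) ℂ) : 0 ≤ sn M :=
  Finset.sum_nonneg fun i _ => Finset.sum_nonneg fun j _ => norm_nonneg _

lemma en_mulVec_le {n : ℕ} (M : Matrix (Fin n) (Fin n) ℂ) (u : Fin n → ℂ) :
    en (M *ᵥ u) ≤ sn M * en u := by
  refine (en_le_sum _).trans ?_
  unfold sn
  rw [Finset.sum_mul]
  refine Finset.sum_le_sum fun i _ => ?_
  rw [Finset.sum_mul]
  simp only [mulVec, dotProduct]
  refine (norm_sum_le _ _).trans (Finset.sum_le_sum fun j _ => ?_)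
  rw [norm_mul]
  exact mul_le_mul_of_nonneg_left (norm_le_en u j) (norm_nonneg _)

lemma norm_qf_le {n : ℕ} (M : Matrix (Fin n) (Fin n) ℂ) (u : Fin n → ℂ) :
    ‖qf M u‖ ≤ sn M * en u ^ 2 := by
  unfold qf
  have := norm_dot_le u (M *ᵥ u)
  nlinarith [en_mulVec_le M u, en_nonneg u]

lemma qf_add {n : ℕ} (M N : Matrix (Fin n) (Fin n) ℂ) (u : Fin n → ℂ) :
    qf (M + N) u = qf M u + qf N u := by simp [qf, add_mulVec]

lemma qf_sub {n : ℕ} (M N : Matrix (Fin n) (Fin n) ℂ) (u : Fin n → ℂ) :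
    qf (M - N) u = qf M u - qf N u := by simp [qf, sub_mulVec]

lemma qf_smul {n : ℕ} (c : ℂ) (M : Matrix (Fin n) (Fin n) ℂ) (u : Fin n → ℂ) :
    qf (c • M) u = c * qf M u := by simp [qf, smul_mulVec]

lemma qf_one {n : ℕ} (u : Fin n → ℂ) :
    qf (1 : Matrix (Fin n) (Fin n) ℂ) u = ((en u ^ 2 : ℝ) : ℂ) := by
  simp [qf, dot_self]

lemma star_dot {n : ℕ} (a b : Fin n → ℂ) : star (star a ⬝ᵥ b) = star b ⬝ᵥ a := by
  rw [star_dotProduct]; simp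

lemma qf_conjT {n : ℕ} (M : Matrix (Fin n) (Fin n) ℂ) (u : Fin n → ℂ) :
    qf Mᴴ u = star (qf M u) := by
  unfold qf
  rw [star_dot, star_mulVec, ← dotProduct_mulVec]

lemma qf_niKer {n : ℕ} (M : Matrix (Fin n) (Fin n) ℂ) (u : Fin n → ℂ) :
    qf (niKer M) u = ((-2 * (qf M u).im : ℝ) : ℂ) := by
  unfold niKer
  rw [qf_smul, qf_sub, qf_conjT]
  apply Complex.ext <;> simp; ring

lemma niKer_herm {n : ℕ} (M : Matrix (Fin n) (Fin n) ℂ) : (niKer M).IsHermitian := by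
  unfold niKer Matrix.IsHermitian
  ext i j
  simp; ring

lemma niKer_psd {n : ℕ} {M : Matrix (Fin n) (Fin n) ℂ} :
    (niKer M).PosSemidef ↔ ∀ u, (qf M u).im ≤ 0 := by
  rw [posSemidef_iff_dotProduct_mulVec]
  constructor
  · rintro ⟨_, h⟩ u
    have := h u
    change 0 ≤ qf (niKer M) u at this
    rw [qf_niKer, Complex.zero_le_real] at this
    linarith
  · intro h
    refine ⟨niKer_herm M, fun u => ?_⟩
    change 0 ≤ qf (niKer M) u
    rw [qf_niKer, Complex.zero_le_real]
    linarith [h u]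

lemma niKer_pd {n : ℕ} {M : Matrix (Fin n) (Fin n) ℂ} :
    (niKer M).PosDef ↔ ∀ u, u ≠ 0 → (qf M u).im < 0 := by
  rw [posDef_iff_dotProduct_mulVec]
  constructor
  · rintro ⟨_, h⟩ u hu
    have := h hu
    change 0 < qf (niKer M) u at this
    rw [qf_niKer, Complex.zero_lt_real] at this
    linarith
  · intro h
    refine ⟨niKer_herm M, fun u hu => ?_⟩
    change 0 < qf (niKer M) u
    rw [qf_niKer, Complex.zero_lt_real]
    linarith [h u hu]

lemma qf_psd {n : ℕ} {M : Matrix (Fin n) (Fin n) ℂ} (h : M.PosSemidef) (u : Fin n → ℂ) :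
    ∃ r : ℝ, 0 ≤ r ∧ qf M u = r := by
  have := h.dotProduct_mulVec_nonneg u
  change 0 ≤ qf M u at this
  rw [Complex.le_def] at this
  exact ⟨(qf M u).re, this.1, Complex.ext rfl (by simpa using this.2.symm)⟩

lemma qf_real {n : ℕ} {A : Matrix (Fin n) (Fin n) ℝ} (hA : A.IsHermitian) (u : Fin n → ℂ) :
    qf (A.map Complex.ofReal) u = (((fun i => (u i).re) ⬝ᵥ (A *ᵥ fun i => (u i).re) +
      (fun i => (u i).im) ⬝ᵥ (A *ᵥ fun i => (u i).im) : ℝ) : ℂ) := by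
  have hH : (A.map Complex.ofReal)ᴴ = A.map Complex.ofReal := by
    ext i j
    have := congrFun (congrFun hA i) j
    simp at this
    simp [this]
  have him : (qf (A.map Complex.ofReal) u).im = 0 := by
    have := qf_conjT (A.map Complex.ofReal) u
    rw [hH] at this
    have h2 := congrArg Complex.im this
    simp at h2
    linarith
  apply Complex.ext
  · simp only [Complex.ofReal_re, qf, dotProduct, mulVec, Pi.star_apply, Complex.re_sum, Finset.mul_sum, ← Finset.sum_add_distrib]
    refine Finset.sum_congr rfl fun i _ => Finset.sum_congr rfl fun j _ => ?_
    simp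
  · rw [him]; simp

lemma qf_real_im {n : ℕ} {A : Matrix (Fin n) (Fin n) ℝ} (hA : A.IsHermitian) (u : Fin n → ℂ) :
    (qf (A.map Complex.ofReal) u).im = 0 := by rw [qf_real hA]; simp

lemma qf_real_psd {n : ℕ} {A : Matrix (Fin n) (Fin n) ℝ} (hA : A.PosSemidef) (u : Fin n → ℂ) :
    0 ≤ (qf (A.map Complex.ofReal) u).re := by
  rw [qf_real hA.1]
  have h1 := hA.dotProduct_mulVec_nonneg fun i => (u i).re
  have h2 := hA.dotProduct_mulVec_nonneg fun i => (u i).im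
  simp only [star_trivial] at h1 h2
  simpa using add_nonneg h1 h2

lemma qf_real_pd {n : ℕ} {A : Matrix (Fin n) (Fin n) ℝ} (hA : A.PosDef) {u : Fin n → ℂ} (hu : u ≠ 0) :
    0 < (qf (A.map Complex.ofReal) u).re := by
  rw [qf_real hA.1]
  have h1 := hA.posSemidef.dotProduct_mulVec_nonneg fun i => (u i).re
  have h2 := hA.posSemidef.dotProduct_mulVec_nonneg fun i => (u i).im
  simp only [star_trivial] at h1 h2
  by_cases h3 : (fun i => (u i).re) = 0
  · have h4 : (fun i => (u i).im) ≠ 0 := by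
      intro h4
      apply hu
      ext i
      exact Complex.ext (congrFun h3 i) (congrFun h4 i)
    have := hA.dotProduct_mulVec_pos h4
    simp only [star_trivial] at this
    simpa using add_pos_of_nonneg_of_pos h1 this
  · have := hA.dotProduct_mulVec_pos h3
    simp only [star_trivial] at this
    simpa using add_pos_of_pos_of_nonneg this h2

lemma continuous_qf_right {n : ℕ} (M : Matrix (Fin n) (Fin n) ℂ) : Continuous (qf M) := by
  unfold qf
  simp only [dotProduct, mulVec, Pi.star_apply]
  fun_prop

lemma qf_scale {n : ℕ} (M : Matrix (Fin n) (Fin n) ℂ) (c : ℂ) (u : Fin n → ℂ) :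
    qf M (c • u) = ((‖c‖ ^ 2 : ℝ) : ℂ) * qf M u := by
  unfold qf
  rw [mulVec_smul, star_smul, smul_dotProduct, dotProduct_smul, smul_eq_mul, smul_eq_mul, ← mul_assoc]
  congr 1
  simpa using Complex.conj_mul' c

lemma coercive {n : ℕ} (M : Matrix (Fin n) (Fin n) ℂ) (h : ∀ u, u ≠ 0 → 0 < (qf M u).re) :
    ∃ δ : ℝ, 0 < δ ∧ ∀ u, δ * en u ^ 2 ≤ (qf M u).re := by
  have hc : IsCompact (Metric.sphere (0 : EuclideanSpace ℂ (Fin n)) 1) := isCompact_sphere _ _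
  have hcont : Continuous fun x : EuclideanSpace ℂ (Fin n) => (qf M x.ofLp).re :=
    Complex.continuous_re.comp ((continuous_qf_right M).comp (PiLp.continuous_ofLp 2 _))
  rcases (Metric.sphere (0 : EuclideanSpace ℂ (Fin n)) 1).eq_empty_or_nonempty with he | hne
  · refine ⟨1, one_pos, fun u => ?_⟩
    by_cases hu : u = 0
    · subst hu; simp [en_zero, qf]
    · exfalso
      have hp := en_pos hu
      have : (WithLp.toLp 2 (((en u)⁻¹ : ℂ) • u) : EuclideanSpace ℂ (Fin n)) ∈ Metric.sphere (0 : EuclideanSpace ℂ (Fin n)) 1 := by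
        simp only [mem_sphere_iff_norm, sub_zero]
        change en _ = 1
        rw [en_smul]
        simp [abs_of_pos hp, hp.ne']
      rw [he] at this
      exact this
  · obtain ⟨x, hx, hmin⟩ := hc.exists_isMinOn hne hcont.continuousOn
    have hx1 : ‖x‖ = 1 := by simpa using hx
    have hx0 : x.ofLp ≠ 0 := by
      intro h0
      have : x = 0 := by ext i; exact congrFun h0 i
      rw [this] at hx1; simp at hx1
    refine ⟨(qf M x.ofLp).re, h _ hx0, fun u => ?_⟩
    by_cases hu : u = 0
    · subst hu; simp [en_zero, qf]
    · have hp := en_pos hu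
      have hm : (WithLp.toLp 2 (((en u)⁻¹ : ℂ) • u) : EuclideanSpace ℂ (Fin n)) ∈ Metric.sphere (0 : EuclideanSpace ℂ (Fin n)) 1 := by
        simp only [mem_sphere_iff_norm, sub_zero]
        change en _ = 1
        rw [en_smul]
        simp [abs_of_pos hp, hp.ne']
      have := hmin hm
      simp only [Set.mem_setOf_eq] at this
      rw [qf_scale, Complex.re_ofReal_mul] at this
      have h2 : ‖((en u)⁻¹ : ℂ)‖ ^ 2 * en u ^ 2 = 1 := by
        simp [abs_of_pos hp]; field_simp
      have h3 := mul_le_mul_of_nonneg_right this (sq_nonneg (en u))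
      refine h3.trans_eq ?_
      linear_combination (qf M u).re * h2


lemma qf_mapstar {n : ℕ} (M : Matrix (Fin n) (Fin n) ℂ) (u : Fin n → ℂ) :
    qf (M.map star) u = star (qf M (star u)) := by
  simp only [qf, dotProduct, mulVec, star_sum, star_mul', Pi.star_apply, star_star, Matrix.map_apply]

lemma continuous_qf_left {n : ℕ} (u : Fin n → ℂ) :
    Continuous fun M : Matrix (Fin n) (Fin n) ℂ => qf M u := by
  unfold qf
  simp only [dotProduct, mulVec, Pi.star_apply]
  fun_prop

lemma continuous_sn {n : ℕ} : Continuous (sn : Matrix (Fin n) (Fin n) ℂ → ℝ) := by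
  unfold sn
  fun_prop

lemma hasPole_conj {n : ℕ} {G : Matrix (Fin n) (Fin n) (RatFunc ℝ)} {s : ℂ} :
    HasPole G (star s) ↔ HasPole G s := by
  simp only [HasPole, isPoleAt_conj]

lemma tendsto_star_ne (a : ℂ) : Tendsto (star : ℂ → ℂ) (𝓝[≠] a) (𝓝[≠] (star a)) := by
  refine tendsto_nhdsWithin_of_tendsto_nhds_of_eventually_within _
    ((continuous_star.tendsto a).mono_left nhdsWithin_le_nhds) ?_
  filter_upwards [self_mem_nhdsWithin] with s hs
  intro h
  exact hs (star_injective h)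

lemma ni_data {n : ℕ} {P : Matrix (Fin n) (Fin n) (RatFunc ℝ)} (hP : IsNI P) (h0 : ¬ HasPole P 0)
    (u : Fin n → ℂ) : SNIData (fun s => qf (evalM P s) u) {s | HasPole P s}
      (qf ((evalInf P).map Complex.ofReal) u) := by
  obtain ⟨h1, h2, h3, h4, -⟩ := hP
  refine ⟨propRat_quad h1 u, finite_poles P, fun s hs hr => h2 s hr hs, h0, ?_, ?_⟩
  · intro ω hω hp
    rcases lt_or_gt_of_ne hω with hneg | hpos
    · have e : jw ω = star (jw (-ω)) := by rw [← jw_neg, neg_neg]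
      have hp' : ¬ HasPole P (jw (-ω)) := by
        rw [← hasPole_conj, ← e]; exact hp
      have := niKer_psd.mp (h3 (-ω) (by linarith) hp') (star u)
      rw [e, evalM_conj, qf_mapstar]
      simp only [Complex.star_def, Complex.conj_im]
      nlinarith
    · have := niKer_psd.mp (h3 ω hpos hp) u
      nlinarith
  · intro ω hω hp
    rcases lt_or_gt_of_ne hω with hneg | hpos
    · have e : jw ω = star (jw (-ω)) := by rw [← jw_neg, neg_neg]
      have hp' : HasPole P (jw (-ω)) := by
        rw [← hasPole_conj, ← e]; exact hp
      obtain ⟨R, hR, ht⟩ := h4 (-ω) (by linarith) hp'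
      obtain ⟨r, hr, hq⟩ := qf_psd hR (star u)
      refine ⟨(-ω) * r, mul_nonneg (by linarith) hr, ?_⟩
      have t1 := ((continuous_qf_left (star u)).tendsto R).comp ht
      rw [hq] at t1
      have t2 : Tendsto star (𝓝[≠] jw ω) (𝓝[≠] jw (-ω)) := by
        have := tendsto_star_ne (jw ω)
        rwa [← jw_neg] at this
      have t3 := (continuous_star.tendsto _).comp ((t1.comp t2).const_mul ((-ω : ℝ) : ℂ))
      have e2 : star (((-ω : ℝ) : ℂ) * (r : ℂ)) = ((-ω * r : ℝ) : ℂ) := by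
        simp
      rw [e2] at t3
      refine t3.congr fun s => ?_
      simp only [Function.comp, qf_smul, star_mul']
      have e3 : qf (evalM P s) u = star (qf (evalM P (star s)) (star u)) := by
        rw [evalM_conj, qf_mapstar]; simp
      rw [e3, jw_neg]
      simp
      ring
    · obtain ⟨R, hR, ht⟩ := h4 ω hpos hp
      obtain ⟨r, hr, hq⟩ := qf_psd hR u
      refine ⟨ω * r, mul_nonneg hpos.le hr, ?_⟩
      have t1 := ((continuous_qf_left u).tendsto R).comp ht
      rw [hq] at t1
      have t3 := t1.const_mul (ω : ℂ)
      rw [← Complex.ofReal_mul] at t3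
      refine t3.congr fun s => ?_
      simp only [Function.comp, qf_smul]
      ring

lemma ni_upper {n : ℕ} {P : Matrix (Fin n) (Fin n) (RatFunc ℝ)} (hP : IsNI P) (h0 : ¬ HasPole P 0)
    (hs : (evalInf P).IsHermitian) {s : ℂ} (hr : 0 < s.re) (u : Fin n → ℂ) :
    0 ≤ (s * (qf (evalM P s) u - qf ((evalInf P).map Complex.ofReal) u)).re :=
  (ni_data hP h0 u).upper (qf_real_im hs u) hr

lemma ni_lower {n : ℕ} {P : Matrix (Fin n) (Fin n) (RatFunc ℝ)} (hP : IsNI P) (h0 : ¬ HasPole P 0)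
    (hs : (evalR P 0).IsHermitian) {s : ℂ} (hr : 0 < s.re) (u : Fin n → ℂ) :
    0 ≤ ((qf ((evalR P 0).map Complex.ofReal) u - qf (evalM P s) u) * star s).re := by
  have := (ni_data hP h0 u).lower (by simp only [evalM_zero_eq]; exact qf_real_im hs u) hr
  simp only [evalM_zero_eq] at this
  exact this

lemma ni_of_stable {n : ℕ} {G : Matrix (Fin n) (Fin n) (RatFunc ℝ)} (hG : MemRHinf G)
    (h : ∀ ω : ℝ, 0 < ω → ∀ u, (qf (evalM G (jw ω)) u).im ≤ 0) : IsNI G := by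
  have hn : ∀ s : ℂ, 0 ≤ s.re → ¬ HasPole G s := fun s hs => np_iff.mp (hG.2 s hs)
  exact ⟨hG.1, fun s hs => hn s hs.le, fun ω hω _ => niKer_psd.mpr (h ω hω),
    fun ω _ hp => absurd hp (hn _ (jw_re ω).ge), fun hp => absurd hp (hn 0 (by simp))⟩

lemma sni_ni {n : ℕ} {G : Matrix (Fin n) (Fin n) (RatFunc ℝ)} (hG : IsSNI G) : IsNI G :=
  ni_of_stable hG.1 fun ω hω u => niKer_psd.mp (hG.2 ω hω).posSemidef u

lemma memRHinf_gen {n : ℕ} {G : Matrix (Fin n) (Fin n) (RatFunc ℝ)} (L : ℂ → ℝ)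
    (hL1 : ∀ s : ℂ, 0 < s.re → ContinuousAt L s) (hL2 : ∃ B, ∀ᶠ x : ℝ in 𝓝[>] 0, L x ≤ B)
    (hL3 : ∃ B, ∀ᶠ s : ℂ in lInf, L s ≤ B)
    (h1 : ∀ᶠ s : ℂ in cofinite, 0 < s.re → ∀ u, en (evalM G s *ᵥ u) ≤ L s * en u)
    (h2 : ∀ ω₀ : ℝ, 0 < ω₀ → ∃ K', ∀ᶠ ω in 𝓝[≠] ω₀, ∀ u, en (evalM G (jw ω) *ᵥ u) ≤ K' * en u) :
    MemRHinf G := by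
  have ent : ∀ (s : ℂ) (L : ℝ), (∀ u, en (evalM G s *ᵥ u) ≤ L * en u) → ∀ i j, ‖evalC (G i j) s‖ ≤ L := by
    intro s L h i j
    have := (entry_le (evalM G s) i j).trans (h (Pi.single j 1))
    rw [en_single, mul_one] at this
    exact this
  obtain ⟨B2, hB2⟩ := hL2
  obtain ⟨B3, hB3⟩ := hL3
  constructor
  · intro i j
    refine proper_of_bdd (K := B3) ?_
    have a : ∀ᶠ s : ℂ in lInf, ∃ x : ℝ, 0 < x ∧ s = x := by
      unfold lInf; rw [eventually_map]
      filter_upwards [eventually_gt_atTop 0] with x hx using ⟨x, hx, rfl⟩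
    filter_upwards [lInf_le h1, a, hB3] with s hs ⟨x, hx, e⟩ hB
    subst e
    exact (ent _ _ (hs (by simpa using hx)) i j).trans hB
  · intro s hs i j
    rcases hs.lt_or_eq with hs | hs
    · have e1 : ∀ᶠ z in 𝓝[≠] s, L z < L s + 1 :=
        ((hL1 s hs).eventually_lt continuousAt_const (by linarith)).filter_mono nhdsWithin_le_nhds
      have e2 : ∀ᶠ z in 𝓝[≠] s, 0 < z.re :=
        (continuousAt_const.eventually_lt Complex.continuous_re.continuousAt hs).filter_mono nhdsWithin_le_nhds
      refine np_of_bdd (l := 𝓝[≠] s) le_rfl (K := L s + 1) ?_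
      filter_upwards [e1, e2, nhdsNE_le_cofinite s h1] with z h3 h4 h5
      exact (ent _ _ (h5 h4) i j).trans h3.le
    · have e := eq_jw hs.symm
      rcases lt_trichotomy s.im 0 with hi | hi | hi
      · have e' : s = star (jw (-s.im)) := by rw [← jw_neg, neg_neg]; exact e
        rw [e', isPoleAt_conj]
        obtain ⟨K', h3⟩ := h2 (-s.im) (by linarith)
        refine np_of_bdd (l := Filter.map jw (𝓝[≠] (-s.im))) ?_ (K := K') ?_
        · exact tendsto_nhdsWithin_of_tendsto_nhds_of_eventually_within _
            ((continuous_jw.tendsto _).mono_left nhdsWithin_le_nhds)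
            (by filter_upwards [self_mem_nhdsWithin] with w hw h using hw (jw_inj h))
        · rw [eventually_map]
          filter_upwards [h3] with w hw using ent _ _ hw i j
      · have : s = 0 := Complex.ext hs.symm hi
        rw [this]
        refine np_of_bdd (l := Filter.map (fun x : ℝ => (x : ℂ)) (𝓝[>] 0)) ?_ (K := B2) ?_
        · refine tendsto_nhdsWithin_of_tendsto_nhds_of_eventually_within _ ?_ ?_
          · have := (Complex.continuous_ofReal.tendsto 0).mono_left (nhdsWithin_le_nhds (s := Set.Ioi 0))
            simpa using this
          · filter_upwards [self_mem_nhdsWithin] with w hw h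
            have hw : 0 < w := hw
            simp at h
            linarith
        · rw [eventually_map]
          have hle : Tendsto (fun x : ℝ => (x : ℂ)) (𝓝[>] 0) cofinite :=
            (Function.Injective.tendsto_cofinite Complex.ofReal_injective).comp
              ((tendsto_id.mono_left (nhdsWithin_mono 0 fun x hx => ne_of_gt hx)).mono_right (nhdsNE_le_cofinite (0 : ℝ)))
          filter_upwards [hle.eventually h1, self_mem_nhdsWithin, hB2] with x hx hx0 hB
          have hx0 : 0 < x := hx0
          exact (ent _ _ (hx (by simpa using hx0)) i j).trans hB
      · rw [e]
        obtain ⟨K', h3⟩ := h2 s.im hi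
        refine np_of_bdd (l := Filter.map jw (𝓝[≠] s.im)) ?_ (K := K') ?_
        · exact tendsto_nhdsWithin_of_tendsto_nhds_of_eventually_within _
            ((continuous_jw.tendsto _).mono_left nhdsWithin_le_nhds)
            (by filter_upwards [self_mem_nhdsWithin] with w hw h using hw (jw_inj h))
        · rw [eventually_map]
          filter_upwards [h3] with w hw using ent _ _ hw i j

lemma memRHinf_of {n : ℕ} {G : Matrix (Fin n) (Fin n) (RatFunc ℝ)} (K : ℝ)
    (h1 : ∀ᶠ s : ℂ in cofinite, 0 < s.re → ∀ u, en (evalM G s *ᵥ u) ≤ K * (‖s‖ / s.re) * en u)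
    (h2 : ∀ ω₀ : ℝ, 0 < ω₀ → ∃ K', ∀ᶠ ω in 𝓝[≠] ω₀, ∀ u, en (evalM G (jw ω) *ᵥ u) ≤ K' * en u) :
    MemRHinf G := by
  have real : ∀ x : ℝ, 0 < x → ‖(x : ℂ)‖ / (x : ℂ).re = 1 := by
    intro x hx
    simp [abs_of_pos hx, hx.ne']
  refine memRHinf_gen (fun s => K * (‖s‖ / s.re)) ?_ ⟨K, ?_⟩ ⟨K, ?_⟩ h1 h2
  · intro s hs
    exact continuousAt_const.mul (continuous_norm.continuousAt.div Complex.continuous_re.continuousAt hs.ne')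
  · filter_upwards [self_mem_nhdsWithin] with x hx
    rw [real x hx, mul_one]
  · unfold lInf; rw [eventually_map]
    filter_upwards [eventually_gt_atTop 0] with x hx
    rw [real x hx, mul_one]

lemma jw_cofinite (ω₀ : ℝ) : Tendsto jw (𝓝[≠] ω₀) cofinite :=
  (Function.Injective.tendsto_cofinite (f := jw) fun _ _ h => jw_inj h).comp
    (tendsto_id.mono_right (nhdsNE_le_cofinite ω₀))

lemma memRHinf_mul {n : ℕ} {G H : Matrix (Fin n) (Fin n) (RatFunc ℝ)} (hG : MemRHinf G)
    (hH : MemRHinf H) : MemRHinf (G * H) := by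
  refine ⟨fun i j => ?_, fun s hs => NP.mul (hG.2 s hs) (hH.2 s hs)⟩
  have t := (tendsto_evalInf hG.1).mul (tendsto_evalInf hH.1)
  have t2 : Tendsto (fun s => ‖(evalM G s * evalM H s) i j‖) lInf
      (𝓝 ‖((evalInf G).map Complex.ofReal * (evalInf H).map Complex.ofReal) i j‖) :=
    (((continuous_id.matrix_elem i j).norm).tendsto _).comp t
  refine proper_of_bdd (K := ‖((evalInf G).map Complex.ofReal * (evalInf H).map Complex.ofReal) i j‖ + 1) ?_
  filter_upwards [t2.eventually (gt_mem_nhds (lt_add_one _)), eventually_NP lInf_le G,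
    eventually_NP lInf_le H] with s h1 h2 h3
  rw [← evalM_mul h2 h3] at h1
  exact h1.le


lemma np_poly (p : ℝ[X]) (s : ℂ) : ¬ IsPoleAt (algebraMap ℝ[X] (RatFunc ℝ) p) s := by
  simp [IsPoleAt]

lemma evalC_poly (p : ℝ[X]) (s : ℂ) :
    evalC (algebraMap ℝ[X] (RatFunc ℝ) p) s = p.eval₂ (algebraMap ℝ ℂ) s := by
  simp [evalC, RatFunc.eval]

lemma np_div {p q : ℝ[X]} {s : ℂ} (h : q.eval₂ (algebraMap ℝ ℂ) s ≠ 0) :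
    ¬ IsPoleAt (algebraMap ℝ[X] (RatFunc ℝ) p / algebraMap ℝ[X] (RatFunc ℝ) q) s := by
  intro hp
  obtain ⟨r, hr⟩ := RatFunc.denom_div_dvd p q
  apply h
  rw [hr, Polynomial.eval₂_mul, show Polynomial.eval₂ _ s (RatFunc.denom _) = 0 from hp, zero_mul]

lemma evalC_div {p q : ℝ[X]} {s : ℂ} (h : q.eval₂ (algebraMap ℝ ℂ) s ≠ 0) :
    evalC (algebraMap ℝ[X] (RatFunc ℝ) p / algebraMap ℝ[X] (RatFunc ℝ) q) s =
      p.eval₂ (algebraMap ℝ ℂ) s / q.eval₂ (algebraMap ℝ ℂ) s := by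
  have hq : algebraMap ℝ[X] (RatFunc ℝ) q ≠ 0 := by
    intro h0
    have : q = 0 := by simpa using h0
    simp [this] at h
  have := evalC_mul (np_div (p := p) h) (np_poly q s)
  rw [div_mul_cancel₀ _ hq, evalC_poly, evalC_poly] at this
  rw [this]; field_simp

lemma np_prod {ι : Type*} (t : Finset ι) {f : ι → RatFunc ℝ} {s : ℂ}
    (hf : ∀ i ∈ t, ¬ IsPoleAt (f i) s) :
    ¬ IsPoleAt (∏ i ∈ t, f i) s ∧ evalC (∏ i ∈ t, f i) s = ∏ i ∈ t, evalC (f i) s := by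
  classical
  induction t using Finset.induction_on with
  | empty => simpa using ⟨np_one s, evalC_one s⟩
  | insert a t ha ih =>
    rw [Finset.prod_insert ha, Finset.prod_insert ha]
    have h1 := ih fun i hi => hf i (Finset.mem_insert_of_mem hi)
    have h2 := hf a (Finset.mem_insert_self a t)
    exact ⟨np_mul h2 h1.1, by rw [evalC_mul h2 h1.1, h1.2]⟩

lemma evalC_det {n : ℕ} {G : Matrix (Fin n) (Fin n) (RatFunc ℝ)} {s : ℂ} (hG : NP G s) :
    evalC G.det s = (evalM G s).det := by
  rw [Matrix.det_apply', Matrix.det_apply']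
  have e : ∀ σ : Equiv.Perm (Fin n), (((Equiv.Perm.sign σ : ℤˣ) : ℤ) : RatFunc ℝ) =
      RatFunc.C (((Equiv.Perm.sign σ : ℤˣ) : ℤ) : ℝ) := fun σ => by simp
  have h1 : ∀ σ : Equiv.Perm (Fin n), _ := fun σ =>
    np_prod Finset.univ (f := fun i => G (σ i) i) (s := s) fun i _ => hG _ _
  rw [evalC_sum]
  · refine Finset.sum_congr rfl fun σ _ => ?_
    rw [e, evalC_mul (np_C _ _) (h1 σ).1, evalC_C, (h1 σ).2]
    simp [evalM]
  · intro σ _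
    rw [e]
    exact np_mul (np_C _ _) (h1 σ).1

lemma det_ne_zero_of_inj {n : ℕ} {G : Matrix (Fin n) (Fin n) (RatFunc ℝ)} {s : ℂ} (hG : NP G s)
    (hi : ∀ u, evalM G s *ᵥ u = 0 → u = 0) : G.det ≠ 0 := by
  intro h
  have h2 := evalC_det hG
  rw [h, evalC_zero] at h2
  obtain ⟨v, hv, hv2⟩ := Matrix.exists_mulVec_eq_zero_iff.mpr h2.symm
  exact hv (hi v hv2)

lemma re_conj_div_le {s : ℂ} (hs : 0 < s.re) : (star s / (s + 1)).re ≤ s.re := by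
  have h1 : 0 < Complex.normSq (s + 1) := by
    rw [Complex.normSq_pos]; intro h
    have := congrArg Complex.re h
    simp at this; linarith
  rw [Complex.div_re]
  rw [← add_div, div_le_iff₀ h1, Complex.normSq_apply]
  simp
  nlinarith [mul_pos hs hs, mul_nonneg hs.le (sq_nonneg s.im), sq_nonneg s.im, mul_pos hs (mul_pos hs hs)]

lemma im_inv_jw {ε ω : ℝ} : ((ε : ℂ) / (jw ω + 1)).im = - (ε * ω / (1 + ω ^ 2)) := by
  rw [Complex.div_im]
  simp [Complex.normSq_apply, jw]
  ring

/-- `A ≤ γ` implies `A² ≤ γ A` -/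
lemma sq_le_of_le {n : ℕ} {A : Matrix (Fin n) (Fin n) ℂ} {γ : ℝ} (hγ : 0 < γ) (hA : Aᴴ = A)
    (h1 : ∀ u, 0 ≤ (qf A u).re) (h2 : ∀ u, (qf A u).re ≤ γ * en u ^ 2) (u : Fin n → ℂ) :
    en (A *ᵥ u) ^ 2 / γ ≤ (qf A u).re := by
  have hx := h1 (u - ((γ⁻¹ : ℝ) : ℂ) • (A *ᵥ u))
  have hy := h2 (A *ᵥ u)
  have e1 : star u ⬝ᵥ (A *ᵥ (A *ᵥ u)) = ((en (A *ᵥ u) ^ 2 : ℝ) : ℂ) := by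
    rw [← dot_self, star_mulVec, ← dotProduct_mulVec, hA]
  have e2 : qf A (u - ((γ⁻¹ : ℝ) : ℂ) • (A *ᵥ u)) = qf A u - ((2 * γ⁻¹ * en (A *ᵥ u) ^ 2 : ℝ) : ℂ) +
      ((γ⁻¹ ^ 2 : ℝ) : ℂ) * qf A (A *ᵥ u) := by
    unfold qf
    rw [mulVec_sub, mulVec_smul, star_sub, star_smul, sub_dotProduct, dotProduct_sub, dotProduct_sub,
      smul_dotProduct, smul_dotProduct, dotProduct_smul, dotProduct_smul, e1, dot_self]
    simp only [smul_eq_mul, Complex.star_def, Complex.conj_ofReal]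
    push_cast
    ring
  rw [e2] at hx
  simp only [Complex.add_re, Complex.sub_re, Complex.ofReal_re, Complex.re_ofReal_mul] at hx
  have : γ⁻¹ ^ 2 * (qf A (A *ᵥ u)).re ≤ γ⁻¹ ^ 2 * (γ * en (A *ᵥ u) ^ 2) :=
    mul_le_mul_of_nonneg_left hy (by positivity)
  have e3 : γ⁻¹ ^ 2 * (γ * en (A *ᵥ u) ^ 2) = γ⁻¹ * en (A *ᵥ u) ^ 2 := by field_simp
  rw [div_eq_inv_mul]
  linarith


lemma herm_of_lt {n : ℕ} {A : Matrix (Fin n) (Fin n) ℝ} {γ : ℝ} (h : LoewnerLT A (γ • 1)) :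
    A.IsHermitian := by
  have h1 : ((γ • (1 : Matrix (Fin n) (Fin n) ℝ)) - A).IsHermitian := h.1
  have h2 : (γ • (1 : Matrix (Fin n) (Fin n) ℝ)).IsHermitian := by
    unfold Matrix.IsHermitian; simp
  have := h2.sub h1
  simpa using this

lemma qf_map_smul_sub {n : ℕ} (A : Matrix (Fin n) (Fin n) ℝ) (γ : ℝ) (u : Fin n → ℂ) :
    qf ((γ • (1 : Matrix (Fin n) (Fin n) ℝ) - A).map Complex.ofReal) u =
      γ * (en u ^ 2 : ℝ) - qf (A.map Complex.ofReal) u := by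
  have : (γ • (1 : Matrix (Fin n) (Fin n) ℝ) - A).map Complex.ofReal =
    (γ : ℂ) • (1 : Matrix (Fin n) (Fin n) ℂ) - A.map Complex.ofReal := by
    ext i j
    by_cases h : i = j <;> simp [Matrix.one_apply, h]
  rw [this, qf_sub, qf_smul, qf_one]

lemma lt_coercive {n : ℕ} {A : Matrix (Fin n) (Fin n) ℝ} {γ : ℝ} (h : LoewnerLT A (γ • 1)) :
    ∃ δ : ℝ, 0 < δ ∧ ∀ u, (qf (A.map Complex.ofReal) u).re ≤ (γ - δ) * en u ^ 2 := by
  obtain ⟨δ, hδ, h2⟩ := coercive _ fun u hu => qf_real_pd (u := u) h hu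
  refine ⟨δ, hδ, fun u => ?_⟩
  have := h2 u
  rw [qf_map_smul_sub] at this
  rw [← Complex.ofReal_mul, Complex.sub_re, Complex.ofReal_re] at this
  linarith

lemma dot_qf {n : ℕ} (A : Matrix (Fin n) (Fin n) ℂ) (u : Fin n → ℂ) :
    star (A *ᵥ u) ⬝ᵥ u = star (qf A u) := by
  unfold qf; rw [star_dot]

/-- the pencil `γ - ε/(s+1) - P` -/
def Amat {n : ℕ} (P : Matrix (Fin n) (Fin n) (RatFunc ℝ)) (γ ε : ℝ) :
    Matrix (Fin n) (Fin n) (RatFunc ℝ) :=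
  (RatFunc.C γ - algebraMap ℝ[X] (RatFunc ℝ) (Polynomial.C ε) / algebraMap ℝ[X] (RatFunc ℝ) (X + 1)) • 1 - P

lemma Amat_np {n : ℕ} {P : Matrix (Fin n) (Fin n) (RatFunc ℝ)} {γ ε : ℝ} {s : ℂ} (hP : NP P s)
    (hs : 0 ≤ s.re) : NP (Amat P γ ε) s ∧
    evalM (Amat P γ ε) s = ((γ : ℂ) - (ε : ℂ) / (s + 1)) • 1 - evalM P s := by
  have h1 : (X + 1 : ℝ[X]).eval₂ (algebraMap ℝ ℂ) s ≠ 0 := by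
    simp
    intro h
    have := congrArg Complex.re h
    simp at this; linarith
  have h2 := np_sub (np_C γ s) (np_div (p := Polynomial.C ε) h1)
  refine ⟨(NP.scalar h2).sub hP, ?_⟩
  unfold Amat
  rw [evalM_sub (NP.scalar h2) hP, evalM_scalar, evalC_sub (np_C γ s) (np_div h1), evalC_C, evalC_div h1]
  simp

lemma Amat_lower {n : ℕ} {P : Matrix (Fin n) (Fin n) (RatFunc ℝ)} (hP : IsNI P) (h0 : ¬ HasPole P 0)
    {γ δ ε : ℝ} (hh : (evalR P 0).IsHermitian) (hδ : 0 < δ) (hε : 0 < ε) (hεδ : ε ≤ δ / 2)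
    (hd : ∀ u, (qf ((evalR P 0).map Complex.ofReal) u).re ≤ (γ - δ) * en u ^ 2)
    {s : ℂ} (hs : 0 < s.re) (u : Fin n → ℂ) :
    en u ≤ (2 / δ) * (‖s‖ / s.re) * en (evalM (Amat P γ ε) s *ᵥ u) := by
  have hA := (Amat_np (γ := γ) (ε := ε) (np_iff.mpr (hP.2.1 s hs)) hs.le).2
  by_cases hu : u = 0
  · subst hu; simp [en_zero]
  have hp := en_pos hu
  have hB := ni_lower hP h0 hh hs u
  have h1 : s.re * (δ / 2) * en u ^ 2 ≤ (qf (evalM (Amat P γ ε) s) u * star s).re := by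
    rw [hA, qf_sub, qf_smul, qf_one]
    have e1 : (((γ : ℂ) - (ε : ℂ) / (s + 1)) * ((en u ^ 2 : ℝ) : ℂ) - qf (evalM P s) u) * star s =
      ((γ * en u ^ 2 : ℝ) : ℂ) * star s - ((ε * en u ^ 2 : ℝ) : ℂ) * (star s / (s + 1))
      - qf (evalM P s) u * star s := by push_cast; ring
    rw [e1]
    simp only [Complex.sub_re, Complex.re_ofReal_mul]
    have e2 := qf_real_im hh u
    rw [sub_mul, Complex.sub_re, Complex.mul_re (qf (Matrix.map _ _) u), e2] at hB
    have e3 : (star s).re = s.re := by simp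
    rw [e3] at hB ⊢
    have h3 := mul_le_mul_of_nonneg_left (re_conj_div_le hs) (show 0 ≤ ε * en u ^ 2 by positivity)
    have h4 := mul_le_mul_of_nonneg_right (hd u) hs.le
    have h5 : 0 ≤ (δ / 2 - ε) * en u ^ 2 * s.re := by
      have : 0 ≤ δ / 2 - ε := by linarith
      positivity
    nlinarith
  have h2 : (qf (evalM (Amat P γ ε) s) u * star s).re ≤ en u * en (evalM (Amat P γ ε) s *ᵥ u) * ‖s‖ := by
    refine (Complex.re_le_norm _).trans ?_
    rw [norm_mul, norm_star]
    exact mul_le_mul_of_nonneg_right (norm_dot_le _ _) (norm_nonneg _)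
  have h3 : s.re * (δ / 2) * en u ≤ en (evalM (Amat P γ ε) s *ᵥ u) * ‖s‖ := by
    have := h1.trans h2
    refine le_of_mul_le_mul_right ?_ hp
    nlinarith
  have e : (2 / δ) * (‖s‖ / s.re) * en (evalM (Amat P γ ε) s *ᵥ u) =
    (en (evalM (Amat P γ ε) s *ᵥ u) * ‖s‖) / (s.re * (δ / 2)) := by field_simp
  rw [e, le_div_iff₀ (by positivity)]
  linarith

lemma Amat_axis {n : ℕ} {P : Matrix (Fin n) (Fin n) (RatFunc ℝ)} (hP : IsNI P)
    {γ ε : ℝ} {ω : ℝ} (hω : 0 < ω) (hp : NP P (jw ω)) (u : Fin n → ℂ) :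
    ε * ω / (1 + ω ^ 2) * en u ^ 2 ≤ (qf (evalM (Amat P γ ε) (jw ω)) u).im := by
  have hA := (Amat_np (γ := γ) (ε := ε) hp (jw_re ω).ge).2
  have := niKer_psd.mp (hP.2.2.1 ω hω (np_iff.mp hp)) u
  rw [hA, qf_sub, qf_smul, qf_one, Complex.sub_im, Complex.im_mul_ofReal, Complex.sub_im, im_inv_jw]
  simp only [Complex.ofReal_im]
  linarith

lemma inf_le_zero {n : ℕ} {P : Matrix (Fin n) (Fin n) (RatFunc ℝ)} (hP : IsNI P) (h0 : ¬ HasPole P 0)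
    (hi : (evalInf P).IsHermitian) (hh : (evalR P 0).IsHermitian) (u : Fin n → ℂ) :
    (qf ((evalInf P).map Complex.ofReal) u).re ≤ (qf ((evalR P 0).map Complex.ofReal) u).re := by
  have h1 := ni_upper hP h0 hi (s := 1) (by simp) u
  have h2 := ni_lower hP h0 hh (s := 1) (by simp) u
  simp at h1 h2
  linarith

lemma inv_rh {n : ℕ} {P : Matrix (Fin n) (Fin n) (RatFunc ℝ)} (hP : IsNI P) (h0 : ¬ HasPole P 0)
    {γ δ ε : ℝ} (hh : (evalR P 0).IsHermitian) (hδ : 0 < δ) (hε : 0 < ε) (hεδ : ε ≤ δ / 2)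
    (hd : ∀ u, (qf ((evalR P 0).map Complex.ofReal) u).re ≤ (γ - δ) * en u ^ 2) :
    IsUnit (Amat P γ ε).det ∧ MemRHinf (Amat P γ ε)⁻¹ ∧ IsNI (Amat P γ ε)⁻¹ := by
  have hdet : (Amat P γ ε).det ≠ 0 := by
    have hnp := np_iff.mpr (hP.2.1 1 (by simp))
    refine det_ne_zero_of_inj (s := 1) (Amat_np hnp (by simp)).1 fun u hu => ?_
    have := Amat_lower hP h0 hh hδ hε hεδ hd (s := 1) (by simp) u
    rw [hu, en_zero, mul_zero] at this
    exact en_eq_zero.mp (le_antisymm this (en_nonneg u))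
  have hu : IsUnit (Amat P γ ε).det := isUnit_iff_ne_zero.mpr hdet
  have hAR : Amat P γ ε * (Amat P γ ε)⁻¹ = 1 := Matrix.mul_nonsing_inv _ hu
  have hev : ∀ s, NP (Amat P γ ε) s → NP (Amat P γ ε)⁻¹ s → ∀ v : Fin n → ℂ,
      evalM (Amat P γ ε) s *ᵥ (evalM (Amat P γ ε)⁻¹ s *ᵥ v) = v := by
    intro s h1 h2 v
    rw [mulVec_mulVec, ← evalM_mul h1 h2, hAR, evalM_one, one_mulVec]
  have hm : MemRHinf (Amat P γ ε)⁻¹ := by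
    refine memRHinf_of (2 / δ) ?_ ?_
    · filter_upwards [eventually_NP le_rfl (Amat P γ ε), eventually_NP le_rfl (Amat P γ ε)⁻¹] with s h1 h2 hs v
      have := Amat_lower hP h0 hh hδ hε hεδ hd hs (evalM (Amat P γ ε)⁻¹ s *ᵥ v)
      rwa [hev s h1 h2] at this
    · intro ω₀ hω₀
      refine ⟨(1 + ω₀ ^ 2) / (ε * ω₀) + 1, ?_⟩
      have hc : ContinuousAt (fun ω : ℝ => (1 + ω ^ 2) / (ε * ω)) ω₀ :=
        ContinuousAt.div (by fun_prop) (by fun_prop) (by positivity)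
      have e1 : ∀ᶠ ω in 𝓝[≠] ω₀, (1 + ω ^ 2) / (ε * ω) < (1 + ω₀ ^ 2) / (ε * ω₀) + 1 :=
        (hc.eventually_lt continuousAt_const (by linarith)).filter_mono nhdsWithin_le_nhds
      have e2 : ∀ᶠ ω in 𝓝[≠] ω₀, 0 < ω := (lt_mem_nhds hω₀).filter_mono nhdsWithin_le_nhds
      filter_upwards [e1, e2, (jw_cofinite ω₀).eventually (eventually_NP le_rfl (Amat P γ ε)),
        (jw_cofinite ω₀).eventually (eventually_NP le_rfl (Amat P γ ε)⁻¹),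
        (jw_cofinite ω₀).eventually (eventually_NP le_rfl P)] with ω h1 h2 h3 h4 h5 v
      have h6 := Amat_axis hP (γ := γ) (ε := ε) h2 h5 (evalM (Amat P γ ε)⁻¹ (jw ω) *ᵥ v)
      have h7 : (qf (evalM (Amat P γ ε) (jw ω)) (evalM (Amat P γ ε)⁻¹ (jw ω) *ᵥ v)).im ≤
          en (evalM (Amat P γ ε)⁻¹ (jw ω) *ᵥ v) * en v := by
        refine (Complex.im_le_norm _).trans ?_
        have := norm_dot_le (evalM (Amat P γ ε)⁻¹ (jw ω) *ᵥ v)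
          (evalM (Amat P γ ε) (jw ω) *ᵥ (evalM (Amat P γ ε)⁻¹ (jw ω) *ᵥ v))
        rw [hev _ h3 h4] at this
        unfold qf
        rw [hev _ h3 h4]
        exact this
      set z := evalM (Amat P γ ε)⁻¹ (jw ω) *ᵥ v with hz
      by_cases hz0 : z = 0
      · rw [hz0, en_zero]
        have := en_nonneg v
        positivity
      have hp := en_pos hz0
      have h8 : ε * ω / (1 + ω ^ 2) * en z ≤ en v := by
        refine le_of_mul_le_mul_right ?_ hp
        nlinarith
      have h9 : en z ≤ (1 + ω ^ 2) / (ε * ω) * en v := by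
        have e : (1 + ω ^ 2) / (ε * ω) * en v = en v / (ε * ω / (1 + ω ^ 2)) := by field_simp
        rw [e, le_div_iff₀ (by positivity)]
        linarith
      exact h9.trans (mul_le_mul_of_nonneg_right h1.le (en_nonneg v))
  refine ⟨hu, hm, ni_of_stable hm fun ω₀ hω₀ v => ?_⟩
  have hcont : Tendsto (fun ω => (qf (evalM (Amat P γ ε)⁻¹ (jw ω)) v).im) (𝓝[≠] ω₀)
      (𝓝 (qf (evalM (Amat P γ ε)⁻¹ (jw ω₀)) v).im) := by
    have h1 : ContinuousAt (evalM (Amat P γ ε)⁻¹) (jw ω₀) := continuousAt_evalM (hm.2 _ (jw_re ω₀).ge)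
    have h2 := ((Complex.continuous_im.comp (continuous_qf_left v)).continuousAt.tendsto).comp
      (h1.tendsto.comp ((continuous_jw.tendsto ω₀).mono_left (nhdsWithin_le_nhds (s := {ω₀}ᶜ))))
    exact h2
  refine le_of_tendsto hcont ?_
  have e2 : ∀ᶠ ω in 𝓝[≠] ω₀, 0 < ω := (lt_mem_nhds hω₀).filter_mono nhdsWithin_le_nhds
  filter_upwards [e2, (jw_cofinite ω₀).eventually (eventually_NP le_rfl (Amat P γ ε)),
    (jw_cofinite ω₀).eventually (eventually_NP le_rfl P)] with ω h2 h3 h5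
  have h4 : NP (Amat P γ ε)⁻¹ (jw ω) := hm.2 _ (jw_re ω).ge
  have h6 := Amat_axis hP (γ := γ) (ε := ε) h2 h5 (evalM (Amat P γ ε)⁻¹ (jw ω) *ᵥ v)
  have h7 : qf (evalM (Amat P γ ε)⁻¹ (jw ω)) v =
      star (qf (evalM (Amat P γ ε) (jw ω)) (evalM (Amat P γ ε)⁻¹ (jw ω) *ᵥ v)) := by
    rw [← dot_qf, hev _ h3 h4]; rfl
  rw [h7]
  have : 0 ≤ ε * ω / (1 + ω ^ 2) * en (evalM (Amat P γ ε)⁻¹ (jw ω) *ᵥ v) ^ 2 := by positivity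
  simp
  linarith


lemma lInf_pos : ∀ᶠ s : ℂ in lInf, 0 < s.re := by
  unfold lInf; rw [eventually_map]
  filter_upwards [eventually_gt_atTop 0] with x hx using by simpa using hx

lemma tendsto_eps_inf (ε : ℝ) : Tendsto (fun s : ℂ => (ε : ℂ) / (s + 1)) lInf (𝓝 0) := by
  unfold lInf
  rw [tendsto_map'_iff]
  have h1 : Tendsto (fun x : ℝ => ε / (x + 1)) atTop (𝓝 0) :=
    tendsto_const_nhds.div_atTop (tendsto_atTop_add_const_right _ _ tendsto_id)
  have h2 := (Complex.continuous_ofReal.tendsto 0).comp h1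
  simp only [Complex.ofReal_zero] at h2
  refine h2.congr fun x => ?_
  simp

lemma K_eps {n : ℕ} {P : Matrix (Fin n) (Fin n) (RatFunc ℝ)} (hP : IsNI P) (h0 : ¬ HasPole P 0)
    {γ δ ε : ℝ} (hγ : 0 < γ) (hi : (evalInf P).PosSemidef)
    (hh : (evalR P 0).IsHermitian) (hδ : 0 < δ) (hε : 0 < ε) (hεδ : ε ≤ δ / 2)
    (hd : ∀ u, (qf ((evalR P 0).map Complex.ofReal) u).re ≤ (γ - δ) * en u ^ 2)
    {s : ℂ} (hs : 0 < s.re) (u : Fin n → ℂ) :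
    s.re / γ * en (evalM P s *ᵥ u + ((ε : ℂ) / (s + 1)) • u) ^ 2 ≤
      (s * (qf (evalM P s) u + ((ε : ℂ) / (s + 1)) * (en u ^ 2 : ℝ))).re := by
  obtain ⟨hu, hm, hni⟩ := inv_rh hP h0 hh hδ hε hεδ hd
  set R := (Amat P γ ε)⁻¹ with hR
  have hAR : Amat P γ ε * R = 1 := Matrix.mul_nonsing_inv _ hu
  have hRA : R * Amat P γ ε = 1 := Matrix.nonsing_inv_mul _ hu
  have hRnp : ∀ z : ℂ, 0 ≤ z.re → NP R z := hm.2
  -- value at infinity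
  set Pi := (evalInf P).map Complex.ofReal with hPi
  set Ri := (evalInf R).map Complex.ofReal with hRi
  have hinf : ((γ : ℂ) • (1 : Matrix (Fin n) (Fin n) ℂ) - Pi) * Ri = 1 := by
    have t1 : Tendsto (fun s => evalM (Amat P γ ε) s) lInf (𝓝 ((γ : ℂ) • 1 - Pi)) := by
      have t : Tendsto (fun s : ℂ => ((γ : ℂ) - (ε : ℂ) / (s + 1)) • (1 : Matrix (Fin n) (Fin n) ℂ) - evalM P s) lInf
          (𝓝 (((γ : ℂ) - 0) • (1 : Matrix (Fin n) (Fin n) ℂ) - Pi)) :=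
        ((tendsto_const_nhds.sub (tendsto_eps_inf ε)).smul_const _).sub (tendsto_evalInf hP.1)
      rw [sub_zero] at t
      refine t.congr' ?_
      filter_upwards [lInf_pos] with z hz
      exact (Amat_np (np_iff.mpr (hP.2.1 z hz)) hz.le).2.symm
    have t2 := t1.mul (tendsto_evalInf hm.1)
    refine tendsto_nhds_unique (t2.congr' ?_) tendsto_const_nhds
    filter_upwards [lInf_pos] with z hz
    rw [← evalM_mul (Amat_np (np_iff.mpr (hP.2.1 z hz)) hz.le).1 (hRnp z hz.le), hAR, evalM_one]
  have hPiH : Piᴴ = Pi := by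
    ext i j
    have := congrFun (congrFun hi.1 i) j
    simp at this
    simp [Pi, this]
  have hsq := sq_le_of_le hγ hPiH (qf_real_psd hi) (fun w => by
    have h1 := inf_le_zero hP h0 hi.1 hh w
    have h2 := hd w
    have : 0 ≤ δ * en w ^ 2 := by positivity
    linarith)
  have norm_sub : ∀ (a : ℝ) (x y : Fin n → ℂ),
      en ((a : ℂ) • x - y) ^ 2 = a ^ 2 * en x ^ 2 - 2 * a * (star y ⬝ᵥ x).re + en y ^ 2 := by
    intro a x y
    have e := dot_self ((a : ℂ) • x - y)
    have e2 := star_dot y x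
    rw [star_sub, sub_dotProduct, dotProduct_sub, dotProduct_sub, star_smul, smul_dotProduct,
      smul_dotProduct, dotProduct_smul, dotProduct_smul, dot_self, dot_self, ← e2] at e
    have e3 := congrArg Complex.re e
    rw [Complex.ofReal_re] at e3
    rw [← e3]
    simp [-Complex.ofReal_pow, Complex.mul_re]
    ring
  have hRi1 : ∀ v, (qf Ri v).im = 0 ∧ en v ^ 2 / γ ≤ (qf Ri v).re := by
    intro v
    set w := Ri *ᵥ v with hw
    have hv : v = (γ : ℂ) • w - Pi *ᵥ w := by
      have : ((γ : ℂ) • (1 : Matrix (Fin n) (Fin n) ℂ) - Pi) *ᵥ w = v := by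
        rw [hw, mulVec_mulVec, hinf, one_mulVec]
      rw [← this, sub_mulVec, smul_mulVec, one_mulVec]
    have hq : qf Ri v = ((γ * en w ^ 2 : ℝ) : ℂ) - star (qf Pi w) := by
      change star v ⬝ᵥ w = _
      rw [← dot_qf]
      conv_lhs => rw [hv]
      rw [star_sub, sub_dotProduct, star_smul, smul_dotProduct, dot_self]
      simp
    have him := qf_real_im hi.1 w
    have hn : en v ^ 2 = γ ^ 2 * en w ^ 2 - 2 * γ * (qf Pi w).re + en (Pi *ᵥ w) ^ 2 := by
      rw [hv, norm_sub, dot_qf]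
      simp
    constructor
    · rw [hq]
      rw [Complex.sub_im, Complex.ofReal_im]
      simp [him, Pi]
    · rw [hq, hn, Complex.sub_re, Complex.ofReal_re, Complex.star_def, Complex.conj_re, div_le_iff₀ hγ]
      have := hsq w
      rw [div_le_iff₀ hγ] at this
      nlinarith
  have hR0 : ¬ HasPole R 0 := np_iff.mp (hRnp 0 (by simp))
  have hPs := np_iff.mpr (hP.2.1 s hs)
  have hAs := Amat_np (γ := γ) (ε := ε) hPs hs.le
  set y := evalM P s *ᵥ u + ((ε : ℂ) / (s + 1)) • u with hy
  set v := evalM (Amat P γ ε) s *ᵥ u with hv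
  have hv2 : v = (γ : ℂ) • u - y := by
    rw [hv, hAs.2, sub_mulVec, smul_mulVec, one_mulVec, hy, sub_smul]
    abel
  have hRv : evalM R s *ᵥ v = u := by
    rw [hv, mulVec_mulVec, ← evalM_mul (hRnp s hs.le) hAs.1, hRA, evalM_one, one_mulVec]
  have hup := (ni_data hni hR0 v).upper (hRi1 v).1 hs
  have h1 := (hRi1 v).2
  have e1 : qf (evalM R s) v = star v ⬝ᵥ u := by unfold qf; rw [hRv]
  have e2 : star v ⬝ᵥ u = ((γ * en u ^ 2 : ℝ) : ℂ) - star y ⬝ᵥ u := by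
    rw [hv2, star_sub, sub_dotProduct, star_smul, smul_dotProduct, dot_self]
    simp
  have e3 : en v ^ 2 = γ ^ 2 * en u ^ 2 - 2 * γ * (star y ⬝ᵥ u).re + en y ^ 2 := by
    rw [hv2, norm_sub]
  have e4 : qf (evalM P s) u + ((ε : ℂ) / (s + 1)) * (en u ^ 2 : ℝ) = star (star y ⬝ᵥ u) := by
    rw [star_dot, hy, dotProduct_add, dotProduct_smul, dot_self]; rfl
  rw [e4]
  simp only [e1, e2] at hup
  change 0 ≤ (s * (_ - qf Ri v)).re at hup
  rw [Complex.mul_re, Complex.sub_re, Complex.sub_im, (hRi1 v).1, Complex.sub_re, Complex.sub_im,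
    Complex.ofReal_re, Complex.ofReal_im] at hup
  rw [Complex.mul_re, Complex.star_def, Complex.conj_re, Complex.conj_im]
  have h2 := mul_le_mul_of_nonneg_left h1 hs.le
  rw [e3] at h2
  have e5 : s.re * ((γ ^ 2 * en u ^ 2 - 2 * γ * (star y ⬝ᵥ u).re + en y ^ 2) / γ) =
    s.re * (γ * en u ^ 2) - 2 * s.re * (star y ⬝ᵥ u).re + s.re / γ * en y ^ 2 := by
    field_simp
  rw [e5] at h2
  nlinarith

lemma continuous_en {n : ℕ} : Continuous (en : (Fin n → ℂ) → ℝ) := by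
  unfold en
  exact continuous_norm.comp (PiLp.continuous_toLp 2 _)

lemma K_ineq {n : ℕ} {P : Matrix (Fin n) (Fin n) (RatFunc ℝ)} (hP : IsNI P) (h0 : ¬ HasPole P 0)
    {γ : ℝ} (hγ : 0 < γ) (hi : (evalInf P).PosSemidef) (hh : (evalR P 0).IsHermitian)
    {δ : ℝ} (hδ : 0 < δ)
    (hd : ∀ u, (qf ((evalR P 0).map Complex.ofReal) u).re ≤ (γ - δ) * en u ^ 2)
    {s : ℂ} (hs : 0 < s.re) (u : Fin n → ℂ) :
    s.re / γ * en (evalM P s *ᵥ u) ^ 2 ≤ (s * qf (evalM P s) u).re := by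
  have c1 : Continuous fun ε : ℝ => s.re / γ * en (evalM P s *ᵥ u + ((ε : ℂ) / (s + 1)) • u) ^ 2 := by
    have : Continuous fun ε : ℝ => evalM P s *ᵥ u + ((ε : ℂ) / (s + 1)) • u := by fun_prop
    exact continuous_const.mul ((continuous_en.comp this).pow 2)
  have c2 : Continuous fun ε : ℝ => (s * (qf (evalM P s) u + ((ε : ℂ) / (s + 1)) * (en u ^ 2 : ℝ))).re := by
    fun_prop
  have t1 := (c1.tendsto 0).mono_left (nhdsWithin_le_nhds (s := Set.Ioi 0))
  have t2 := (c2.tendsto 0).mono_left (nhdsWithin_le_nhds (s := Set.Ioi 0))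
  have := le_of_tendsto_of_tendsto t1 t2 (by
    have : ∀ᶠ ε : ℝ in 𝓝[>] 0, ε ≤ δ / 2 :=
      (ge_mem_nhds (by positivity : (0:ℝ) < δ / 2)).filter_mono nhdsWithin_le_nhds
    filter_upwards [self_mem_nhdsWithin, this] with ε h1 h2
    exact K_eps hP h0 hγ hi hh hδ h1 h2 hd hs u)
  simpa using this


lemma quad_bound {z w a : ℝ} (hz : 0 ≤ z) (hw : 0 ≤ w) (ha : 0 ≤ a)
    (h : z ^ 2 ≤ a * (z * w + w ^ 2)) : z ≤ 2 * (a + 1) * w := by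
  by_contra hc
  push Not at hc
  have h1 : 2 * (a + 1) * w * z ≤ z * z := mul_le_mul_of_nonneg_right hc.le hz
  have hzpos : 0 < z := lt_of_le_of_lt (by positivity) hc
  have h2 : a * (w * w) ≤ a * (w * z) := by
    apply mul_le_mul_of_nonneg_left _ ha
    apply mul_le_mul_of_nonneg_left _ hw
    nlinarith [mul_nonneg ha hw]
  rcases hw.lt_or_eq with hw | hw
  · nlinarith [mul_pos hw hzpos]
  · subst hw
    nlinarith

lemma expand_ey {n : ℕ} (C : Matrix (Fin n) (Fin n) ℂ) (z w1 w2 : Fin n → ℂ) :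
    ∃ r : ℂ, ‖r‖ ≤ (1 + sn C) * (en z * (en w1 + en w2) + (en w1 + en w2) ^ 2) ∧
      star (C *ᵥ z + w2) ⬝ᵥ (z - w1) = star (qf C z) + r := by
  refine ⟨- (star (C *ᵥ z) ⬝ᵥ w1) + star w2 ⬝ᵥ z - star w2 ⬝ᵥ w1, ?_, ?_⟩
  · have h1 := norm_dot_le (C *ᵥ z) w1
    have h2 := norm_dot_le w2 z
    have h3 := norm_dot_le w2 w1
    have h4 := en_mulVec_le C z
    have h5 := norm_sub_le (- (star (C *ᵥ z) ⬝ᵥ w1) + star w2 ⬝ᵥ z) (star w2 ⬝ᵥ w1)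
    have h6 := norm_add_le (- (star (C *ᵥ z) ⬝ᵥ w1)) (star w2 ⬝ᵥ z)
    rw [norm_neg] at h6
    have a := en_nonneg z
    have b := en_nonneg w1
    have c := en_nonneg w2
    have d := sn_nonneg C
    have h7 : en (C *ᵥ z) * en w1 ≤ sn C * en z * en w1 := mul_le_mul_of_nonneg_right h4 b
    have : (1 + sn C) * (en z * (en w1 + en w2) + (en w1 + en w2) ^ 2) =
      sn C * en z * en w1 + en w2 * en z + en w2 * en w1 + (en z * en w1 + sn C * (en z * en w2) +
       sn C * (en w1 + en w2) ^ 2 + en w1 ^ 2 + en w1 * en w2 + en w2 ^ 2) := by ring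
    rw [this]
    have : 0 ≤ (en z * en w1 + sn C * (en z * en w2) +
       sn C * (en w1 + en w2) ^ 2 + en w1 ^ 2 + en w1 * en w2 + en w2 ^ 2) := by positivity
    linarith
  · rw [← dot_qf, star_add, add_dotProduct, dotProduct_sub, dotProduct_sub]
    ring

lemma en_sub_sq {n : ℕ} (z w : Fin n → ℂ) : en z ^ 2 - 2 * (en z * en w) ≤ en (z - w) ^ 2 := by
  have h := en_add (z - w) w
  rw [sub_add_cancel] at h
  have a := en_nonneg z
  have b := en_nonneg w
  have c := en_nonneg (z - w)
  by_cases hzw : en w ≤ en z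
  · nlinarith [mul_self_le_mul_self (sub_nonneg.mpr hzw) (by linarith : en z - en w ≤ en (z - w))]
  · push Not at hzw
    nlinarith

lemma orhp_bound {n : ℕ} {P C : Matrix (Fin n) (Fin n) (RatFunc ℝ)} (hP : IsNI P) (h0 : ¬ HasPole P 0)
    {γ : ℝ} {γ₁ : ℝ} (hγ₁ : 0 < γ₁) (hlt : γ₁ < γ)
    (hi : (evalInf P).PosSemidef) (hh : (evalR P 0).IsHermitian)
    {δ : ℝ} (hδ : 0 < δ)
    (hd : ∀ u, (qf ((evalR P 0).map Complex.ofReal) u).re ≤ (γ₁ - δ) * en u ^ 2)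
    (hC : IsSNI C) (hCl : LoewnerLE (evalR C 0) (γ⁻¹ • 1))
    {s : ℂ} (hs : 0 < s.re) (z w1 w2 : Fin n → ℂ)
    (hz : z = evalM P s *ᵥ (evalM C s *ᵥ z + w2) + w1) :
    en z ≤ 2 * ((‖s‖ / s.re) * ((1 + sn (evalM C s) + 2 * γ₁⁻¹) / (γ₁⁻¹ - γ⁻¹)) + 1) * (en w1 + en w2) := by
  have hγ : 0 < γ := hγ₁.trans hlt
  have hdd : 0 < γ₁⁻¹ - γ⁻¹ := sub_pos.mpr (inv_strictAnti₀ hγ₁ hlt)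
  have hK := K_ineq hP h0 hγ₁ hi hh hδ hd hs (evalM C s *ᵥ z + w2)
  have hy : evalM P s *ᵥ (evalM C s *ᵥ z + w2) = z - w1 := by
    rw [eq_sub_iff_add_eq]; exact hz.symm
  unfold qf at hK
  rw [hy] at hK
  obtain ⟨r, hr, he⟩ := expand_ey (evalM C s) z w1 w2
  rw [he] at hK
  have hC0 : (evalR C 0).IsHermitian := by
    have h1 : (γ⁻¹ • (1 : Matrix (Fin n) (Fin n) ℝ) - evalR C 0).IsHermitian := hCl.1
    have h2 : (γ⁻¹ • (1 : Matrix (Fin n) (Fin n) ℝ)).IsHermitian := by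
      unfold Matrix.IsHermitian; simp
    have := h2.sub h1
    simpa using this
  have hB := ni_lower (sni_ni hC) (np_iff.mp (hC.1.2 0 (by simp))) hC0 hs z
  have hB2 := qf_real_psd hCl z
  rw [qf_map_smul_sub, ← Complex.ofReal_mul, Complex.sub_re, Complex.ofReal_re] at hB2
  rw [sub_mul, Complex.sub_re, Complex.mul_re (qf (Matrix.map _ _) z), qf_real_im hC0] at hB
  rw [Complex.mul_re] at hB
  rw [mul_add, Complex.add_re, Complex.mul_re] at hK
  simp only [Complex.star_def, Complex.conj_re, Complex.conj_im] at hB hK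
  have h1 : (s * r).re ≤ ‖s‖ * ((1 + sn (evalM C s)) * (en z * (en w1 + en w2) + (en w1 + en w2) ^ 2)) := by
    refine (Complex.re_le_norm _).trans ?_
    rw [norm_mul]
    exact mul_le_mul_of_nonneg_left hr (norm_nonneg _)
  have h2 := mul_le_mul_of_nonneg_left (en_sub_sq z w1) (show 0 ≤ s.re / γ₁ by positivity)
  have h3 := mul_le_mul_of_nonneg_left hB2 hs.le
  have hsn : s.re ≤ ‖s‖ := Complex.re_le_norm s
  have a := en_nonneg z
  have b := en_nonneg w1
  have c := en_nonneg w2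
  have d := sn_nonneg (evalM C s)
  set W := en w1 + en w2 with hW
  have hWn : 0 ≤ W := by positivity
  have h4 : s.re / γ₁ * (2 * (en z * en w1)) ≤ ‖s‖ * (2 * γ₁⁻¹ * (en z * W + W ^ 2)) := by
    have e : s.re / γ₁ * (2 * (en z * en w1)) = s.re * (2 * γ₁⁻¹ * (en z * en w1)) := by
      field_simp
    rw [e]
    have : en z * en w1 ≤ en z * W + W ^ 2 := by nlinarith [mul_nonneg a c, sq_nonneg W]
    gcongr
  have h5 : s.re * (γ₁⁻¹ - γ⁻¹) * en z ^ 2 ≤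
      ‖s‖ * ((1 + sn (evalM C s) + 2 * γ₁⁻¹) * (en z * W + W ^ 2)) := by
    have e : s.re / γ₁ = s.re * γ₁⁻¹ := div_eq_mul_inv _ _
    rw [e] at h2 h4 hK
    nlinarith
  refine quad_bound a hWn (by positivity) ?_
  have e : ‖s‖ / s.re * ((1 + sn (evalM C s) + 2 * γ₁⁻¹) / (γ₁⁻¹ - γ⁻¹)) * (en z * W + W ^ 2) =
    (‖s‖ * ((1 + sn (evalM C s) + 2 * γ₁⁻¹) * (en z * W + W ^ 2))) / (s.re * (γ₁⁻¹ - γ⁻¹)) := by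
    rw [div_mul_div_comm, div_mul_eq_mul_div]
    ring
  rw [e, le_div_iff₀ (by positivity)]
  linarith

lemma axis_bound {n : ℕ} {P C : Matrix (Fin n) (Fin n) ℂ} {δ : ℝ} (hδ : 0 < δ)
    (hP : ∀ u, (qf P u).im ≤ 0) (hC : ∀ u, δ * en u ^ 2 ≤ - (qf C u).im) (z w1 w2 : Fin n → ℂ)
    (hz : z = P *ᵥ (C *ᵥ z + w2) + w1) :
    en z ≤ 2 * ((1 + sn C) / δ + 1) * (en w1 + en w2) := by
  have hy : P *ᵥ (C *ᵥ z + w2) = z - w1 := by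
    rw [eq_sub_iff_add_eq]; exact hz.symm
  have h1 := hP (C *ᵥ z + w2)
  unfold qf at h1
  rw [hy] at h1
  obtain ⟨r, hr, he⟩ := expand_ey C z w1 w2
  rw [he, Complex.add_im] at h1
  simp only [Complex.star_def, Complex.conj_im] at h1
  have h2 := hC z
  have h3 := (abs_le.mp (Complex.abs_im_le_norm r)).1
  have d := sn_nonneg C
  refine quad_bound (en_nonneg z) (add_nonneg (en_nonneg _) (en_nonneg _)) (by positivity) ?_
  rw [div_mul_eq_mul_div, le_div_iff₀ hδ]
  linarith

theorem sufficiency {n : ℕ} {P C : Matrix (Fin n) (Fin n) (RatFunc ℝ)} (hP : IsNI P) (h0 : ¬ HasPole P 0)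
    {γ : ℝ} (hγ : 0 < γ) (hi : (evalInf P).PosSemidef) (hlt : LoewnerLT (evalR P 0) (γ • 1))
    (hC : IsSNI C) (hCl : LoewnerLE (evalR C 0) (γ⁻¹ • 1)) : FeedbackStable P C := by
  obtain ⟨δ₀, hδ₀, hd₀⟩ := lt_coercive hlt
  have hh := herm_of_lt hlt
  obtain ⟨γ₁, δ, hγ₁, hγ₁lt, hδ, hd⟩ : ∃ γ₁ δ : ℝ, 0 < γ₁ ∧ γ₁ < γ ∧ 0 < δ ∧
      ∀ u, (qf ((evalR P 0).map Complex.ofReal) u).re ≤ (γ₁ - δ) * en u ^ 2 := by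
    have h1 : 0 < min δ₀ γ := lt_min hδ₀ hγ
    refine ⟨γ - min δ₀ γ / 2, δ₀ - min δ₀ γ / 2, ?_, ?_, ?_, fun u => ?_⟩
    · linarith [min_le_right δ₀ γ]
    · linarith
    · linarith [min_le_left δ₀ γ]
    · have := hd₀ u
      convert this using 2
      ring
  have core : ∀ s : ℂ, 0 < s.re → ∀ z w1 w2 : Fin n → ℂ,
      z = evalM P s *ᵥ (evalM C s *ᵥ z + w2) + w1 → _ := fun s hs z w1 w2 hz =>
    orhp_bound hP h0 hγ₁ hγ₁lt hi hh hδ hd hC hCl hs z w1 w2 hz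
  have hCnp : ∀ s : ℂ, 0 ≤ s.re → NP C s := hC.1.2
  have hdet : ((1 : Matrix (Fin n) (Fin n) (RatFunc ℝ)) - P * C).det ≠ 0 := by
    have h1 := np_iff.mpr (hP.2.1 1 (by simp))
    have h2 := hCnp 1 (by simp)
    refine det_ne_zero_of_inj (s := 1) (NP.one.sub (h1.mul h2)) fun u hu => ?_
    rw [evalM_sub NP.one (h1.mul h2), evalM_mul h1 h2, evalM_one, sub_mulVec, one_mulVec, sub_eq_zero] at hu
    have := core 1 (by simp) u 0 0 (by simpa using hu)
    rw [en_zero, add_zero, mul_zero] at this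
    exact en_eq_zero.mp (le_antisymm this (en_nonneg u))
  have hu : IsUnit ((1 : Matrix (Fin n) (Fin n) (RatFunc ℝ)) - P * C).det := isUnit_iff_ne_zero.mpr hdet
  set S := ((1 : Matrix (Fin n) (Fin n) (RatFunc ℝ)) - P * C)⁻¹ with hS
  have hS1 : S = P * C * S + 1 := by
    have : (1 - P * C) * S = 1 := Matrix.mul_nonsing_inv _ hu
    rw [sub_mul, one_mul, sub_eq_iff_eq_add] at this
    rw [add_comm]; exact this
  have hT1 : S * P = P * C * (S * P) + P := by
    conv_lhs => rw [hS1]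
    rw [add_mul, one_mul, mul_assoc (P * C)]
  have evS : ∀ s, NP P s → NP C s → NP S s → ∀ w, evalM S s *ᵥ w =
      evalM P s *ᵥ (evalM C s *ᵥ (evalM S s *ᵥ w) + 0) + w := by
    intro s h1 h2 h3 w
    have := congrArg (fun M => evalM M s) hS1
    rw [evalM_add ((h1.mul h2).mul h3) NP.one, evalM_mul (h1.mul h2) h3, evalM_mul h1 h2, evalM_one] at this
    conv_lhs => rw [this]
    simp [add_mulVec, mulVec_mulVec, mul_assoc]
  have evT : ∀ s, NP P s → NP C s → NP (S * P) s → ∀ w, evalM (S * P) s *ᵥ w =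
      evalM P s *ᵥ (evalM C s *ᵥ (evalM (S * P) s *ᵥ w) + w) + 0 := by
    intro s h1 h2 h3 w
    have := congrArg (fun M => evalM M s) hT1
    rw [evalM_add ((h1.mul h2).mul h3) h1, evalM_mul (h1.mul h2) h3, evalM_mul h1 h2] at this
    conv_lhs => rw [this]
    simp [add_mulVec, mulVec_add, mulVec_mulVec, mul_assoc]
  -- general argument
  have gen : ∀ G : Matrix (Fin n) (Fin n) (RatFunc ℝ),
      (∀ s, NP P s → NP C s → NP G s → ∀ w, ∃ w1 w2 : Fin n → ℂ, en w1 + en w2 = en w ∧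
        evalM G s *ᵥ w = evalM P s *ᵥ (evalM C s *ᵥ (evalM G s *ᵥ w) + w2) + w1) → MemRHinf G := by
    intro G hG
    have hdd : 0 < γ₁⁻¹ - γ⁻¹ := sub_pos.mpr (inv_strictAnti₀ hγ₁ hγ₁lt)
    have real : ∀ x : ℝ, 0 < x → ‖(x : ℂ)‖ / (x : ℂ).re = 1 := by
      intro x hx
      simp [abs_of_pos hx, hx.ne']
    have hcs : ∀ s : ℂ, 0 ≤ s.re → ContinuousAt (fun s => sn (evalM C s)) s := fun s hs =>
      continuous_sn.continuousAt.comp (continuousAt_evalM (hCnp s hs))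
    have mono : ∀ a b : ℝ, a ≤ b → 2 * (1 * ((1 + a + 2 * γ₁⁻¹) / (γ₁⁻¹ - γ⁻¹)) + 1) ≤
      2 * (1 * ((1 + b + 2 * γ₁⁻¹) / (γ₁⁻¹ - γ⁻¹)) + 1) := by
      intro a b hab
      gcongr
    refine memRHinf_gen (fun s => 2 * ((‖s‖ / s.re) * ((1 + sn (evalM C s) + 2 * γ₁⁻¹) / (γ₁⁻¹ - γ⁻¹)) + 1))
      ?_ ⟨2 * (1 * ((1 + (sn (evalM C 0) + 1) + 2 * γ₁⁻¹) / (γ₁⁻¹ - γ⁻¹)) + 1), ?_⟩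
      ⟨2 * (1 * ((1 + (sn ((evalInf C).map Complex.ofReal) + 1) + 2 * γ₁⁻¹) / (γ₁⁻¹ - γ⁻¹)) + 1), ?_⟩ ?_ ?_
    · intro s hs
      have h1 := hcs s hs.le
      have h2 : ContinuousAt (fun z : ℂ => ‖z‖ / z.re) s :=
        continuous_norm.continuousAt.div Complex.continuous_re.continuousAt hs.ne'
      fun_prop
    · have h1 : ∀ᶠ z in 𝓝 (0 : ℂ), sn (evalM C z) < sn (evalM C 0) + 1 :=
        (hcs 0 (by simp)).eventually_lt continuousAt_const (by linarith)
      have h2 : Tendsto (fun x : ℝ => (x : ℂ)) (𝓝[>] 0) (𝓝 0) := by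
        have := (Complex.continuous_ofReal.tendsto 0).mono_left (nhdsWithin_le_nhds (s := Set.Ioi 0))
        simpa using this
      filter_upwards [self_mem_nhdsWithin, h2.eventually h1] with x hx h3
      rw [real x hx]
      exact mono _ _ h3.le
    · have h1 := (continuous_sn.tendsto _).comp (tendsto_evalInf hC.1.1)
      have h2 := h1.eventually (gt_mem_nhds (lt_add_one _))
      unfold lInf at h2 ⊢
      rw [eventually_map] at h2 ⊢
      filter_upwards [eventually_gt_atTop 0, h2] with x hx h3
      rw [real x hx]
      exact mono _ _ h3.le
    · filter_upwards [eventually_NP le_rfl P, eventually_NP le_rfl C, eventually_NP le_rfl G] with s h1 h2 h3 hs w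
      obtain ⟨w1, w2, hw, he⟩ := hG s h1 h2 h3 w
      have := core s hs _ w1 w2 he
      rwa [hw] at this
    · intro ω₀ hω₀
      have hpd := niKer_pd.mp (hC.2 ω₀ hω₀)
      obtain ⟨δ', hδ', hco⟩ := coercive (Complex.I • evalM C (jw ω₀)) fun u hu => by
        rw [qf_smul]; simpa using hpd u hu
      refine ⟨2 * ((1 + (sn (evalM C (jw ω₀)) + 1)) / (δ' / 2) + 1), ?_⟩
      have hcj : ContinuousAt (fun ω => evalM C (jw ω)) ω₀ :=
        ContinuousAt.comp (f := jw) (g := evalM C) (continuousAt_evalM (hCnp _ (jw_re ω₀).ge)) continuous_jw.continuousAt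
      have e1 : ∀ᶠ ω in 𝓝[≠] ω₀, sn (evalM C (jw ω)) < sn (evalM C (jw ω₀)) + 1 :=
        ((continuous_sn.continuousAt.comp hcj).eventually_lt continuousAt_const
          (by simp)).filter_mono nhdsWithin_le_nhds
      have e2 : ∀ᶠ ω in 𝓝[≠] ω₀, sn (evalM C (jw ω) - evalM C (jw ω₀)) < δ' / 2 :=
        ((continuous_sn.continuousAt.comp (hcj.sub continuousAt_const)).eventually_lt continuousAt_const
          (by simp [sn, hδ'])).filter_mono nhdsWithin_le_nhds
      have e3 : ∀ᶠ ω in 𝓝[≠] ω₀, 0 < ω := (lt_mem_nhds hω₀).filter_mono nhdsWithin_le_nhds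
      filter_upwards [e1, e2, e3, (jw_cofinite ω₀).eventually (eventually_NP le_rfl G),
        (jw_cofinite ω₀).eventually (eventually_NP le_rfl P)] with ω h1 h2 h3 h4 h5 w
      obtain ⟨w1, w2, hw, he⟩ := hG _ h5 (hCnp _ (jw_re ω).ge) h4 w
      have := axis_bound (δ := δ' / 2) (by positivity) (niKer_psd.mp (hP.2.2.1 ω h3 (np_iff.mp h5)))
        (fun u => by
          have a1 := hco u
          rw [qf_smul] at a1
          have a2 := norm_qf_le (evalM C (jw ω) - evalM C (jw ω₀)) u
          rw [qf_sub] at a2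
          have a3 := (Complex.im_le_norm _).trans a2
          rw [Complex.sub_im] at a3
          have a4 := mul_le_mul_of_nonneg_right h2.le (sq_nonneg (en u))
          simp at a1
          linarith) _ w1 w2 he
      rw [hw] at this
      refine this.trans ?_
      have := en_nonneg w
      gcongr
  have mS : MemRHinf S := gen S fun s h1 h2 h3 w => ⟨w, 0, by simp [en_zero], evS s h1 h2 h3 w⟩
  have mT : MemRHinf (S * P) := gen (S * P) fun s h1 h2 h3 w => ⟨0, w, by simp [en_zero], evT s h1 h2 h3 w⟩
  have m3 := memRHinf_mul hC.1 mS
  have m4 := memRHinf_mul hC.1 mT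
  rw [← mul_assoc] at m4
  refine ⟨hdet, ?_, ?_⟩
  · rintro (i | i) (j | j)
    · exact mS.1 i j
    · exact mT.1 i j
    · exact m3.1 i j
    · exact m4.1 i j
  · rintro s hs (i | i) (j | j)
    · exact mS.2 s hs i j
    · exact mT.2 s hs i j
    · exact m3.2 s hs i j
    · exact m4.2 s hs i j


lemma map_ofReal_inj {n : ℕ} {A B : Matrix (Fin n) (Fin n) ℝ}
    (h : A.map Complex.ofReal = B.map Complex.ofReal) : A = B :=
  Matrix.map_injective Complex.ofReal_injective h

lemma of_tendsto_inf {n : ℕ} {G : Matrix (Fin n) (Fin n) (RatFunc ℝ)} {A : Matrix (Fin n) (Fin n) ℝ}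
    (ht : Tendsto (evalM G) lInf (𝓝 (A.map Complex.ofReal))) : Proper G ∧ evalInf G = A := by
  have hp : Proper G := by
    intro i j
    have t2 : Tendsto (fun s => ‖(evalM G s) i j‖) lInf (𝓝 ‖(A.map Complex.ofReal) i j‖) :=
      (((continuous_id.matrix_elem i j).norm).tendsto _).comp ht
    refine proper_of_bdd (K := ‖(A.map Complex.ofReal) i j‖ + 1) ?_
    filter_upwards [t2.eventually (gt_mem_nhds (lt_add_one _))] with s h1
    exact h1.le
  exact ⟨hp, map_ofReal_inj (tendsto_nhds_unique (tendsto_evalInf hp) ht)⟩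

lemma ni_mk {n : ℕ} {G : Matrix (Fin n) (Fin n) (RatFunc ℝ)} (hp : Proper G)
    (h1 : ∀ s : ℂ, 0 < s.re → NP G s) (h0 : NP G 0)
    (h2 : ∀ ω : ℝ, 0 < ω → ∀ᶠ ω' in 𝓝[≠] ω, ∀ u, (qf (evalM G (jw ω')) u).im ≤ 0)
    (h3 : ∀ ω : ℝ, 0 < ω → ∃ R : Matrix (Fin n) (Fin n) ℂ, R.PosSemidef ∧
      Tendsto (fun s : ℂ => (s - jw ω) • Complex.I • evalM G s) (𝓝[≠] jw ω) (𝓝 R)) : IsNI G := by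
  refine ⟨hp, fun s hs => np_iff.mp (h1 s hs), fun ω hω hn => niKer_psd.mpr fun u => ?_,
    fun ω hω _ => h3 ω hω, fun h => absurd h (np_iff.mp h0)⟩
  have h4 : ContinuousAt (evalM G) (jw ω) := continuousAt_evalM (np_iff.mpr hn)
  have h5 := ((Complex.continuous_im.comp (continuous_qf_left u)).continuousAt.tendsto).comp
      (h4.tendsto.comp ((continuous_jw.tendsto ω).mono_left (nhdsWithin_le_nhds (s := {ω}ᶜ))))
  refine le_of_tendsto h5 ?_
  filter_upwards [h2 ω hω] with ω' h using h u

lemma res_zero {n : ℕ} {G : Matrix (Fin n) (Fin n) (RatFunc ℝ)} {s₀ : ℂ} (h : NP G s₀) :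
    ∃ R : Matrix (Fin n) (Fin n) ℂ, R.PosSemidef ∧
      Tendsto (fun s : ℂ => (s - s₀) • Complex.I • evalM G s) (𝓝[≠] s₀) (𝓝 R) := by
  refine ⟨0, PosSemidef.zero, ?_⟩
  have h1 : ContinuousAt (fun s : ℂ => (s - s₀) • Complex.I • evalM G s) s₀ := by
    have := continuousAt_evalM h
    have h2 : ContinuousAt (fun s : ℂ => Complex.I • evalM G s) s₀ :=
      (continuous_const_smul Complex.I).continuousAt.comp this
    have h3 : ContinuousAt (fun s : ℂ => s - s₀) s₀ := by fun_prop
    exact h3.smul h2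
  have h2 := h1.tendsto.mono_left (nhdsWithin_le_nhds (s := {s₀}ᶜ))
  simpa using h2

lemma ni_add {n : ℕ} {G H : Matrix (Fin n) (Fin n) (RatFunc ℝ)} (hG : IsNI G) (hH : IsNI H)
    (hG0 : NP G 0) (hH0 : NP H 0) : IsNI (G + H) ∧ NP (G + H) 0 ∧
    evalInf (G + H) = evalInf G + evalInf H := by
  have ht : Tendsto (evalM (G + H)) lInf (𝓝 ((evalInf G + evalInf H).map Complex.ofReal)) := by
    have h1 := (tendsto_evalInf hG.1).add (tendsto_evalInf hH.1)
    have e : (evalInf G).map Complex.ofReal + (evalInf H).map Complex.ofReal =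
      (evalInf G + evalInf H).map Complex.ofReal := by ext i j; simp
    rw [e] at h1
    refine h1.congr' ?_
    filter_upwards [eventually_NP lInf_le G, eventually_NP lInf_le H] with s h2 h3
    exact (evalM_add h2 h3).symm
  obtain ⟨hp, hinf⟩ := of_tendsto_inf ht
  refine ⟨ni_mk hp ?_ (hG0.add hH0) ?_ ?_, hG0.add hH0, hinf⟩
  · intro s hs
    exact (np_iff.mpr (hG.2.1 s hs)).add (np_iff.mpr (hH.2.1 s hs))
  · intro ω hω
    have e3 : ∀ᶠ ω' in 𝓝[≠] ω, 0 < ω' := (lt_mem_nhds hω).filter_mono nhdsWithin_le_nhds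
    filter_upwards [e3, (jw_cofinite ω).eventually (eventually_NP le_rfl G),
      (jw_cofinite ω).eventually (eventually_NP le_rfl H)] with ω' h1 h2 h3 u
    rw [evalM_add h2 h3, qf_add, Complex.add_im]
    have a := niKer_psd.mp (hG.2.2.1 ω' h1 (np_iff.mp h2)) u
    have b := niKer_psd.mp (hH.2.2.1 ω' h1 (np_iff.mp h3)) u
    linarith
  · intro ω hω
    have aux : ∀ K : Matrix (Fin n) (Fin n) (RatFunc ℝ), IsNI K → ∃ R : Matrix (Fin n) (Fin n) ℂ, R.PosSemidef ∧
      Tendsto (fun s : ℂ => (s - jw ω) • Complex.I • evalM K s) (𝓝[≠] jw ω) (𝓝 R) := by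
      intro K hK
      by_cases h : HasPole K (jw ω)
      · exact hK.2.2.2.1 ω hω h
      · exact res_zero (np_iff.mpr h)
    obtain ⟨R1, hR1, t1⟩ := aux G hG
    obtain ⟨R2, hR2, t2⟩ := aux H hH
    refine ⟨R1 + R2, hR1.add hR2, (t1.add t2).congr' ?_⟩
    filter_upwards [eventually_NP (nhdsNE_le_cofinite (jw ω)) G, eventually_NP (nhdsNE_le_cofinite (jw ω)) H] with s h2 h3
    rw [evalM_add h2 h3, smul_add, smul_add]

/-- `(X + s Y) / (s² + d s + q)` -/
def Fmat {n : ℕ} (A B : Matrix (Fin n) (Fin n) ℝ) (d q : ℝ) : Matrix (Fin n) (Fin n) (RatFunc ℝ) :=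
  Matrix.of fun i j => algebraMap ℝ[X] (RatFunc ℝ) (Polynomial.C (B i j) * X + Polynomial.C (A i j)) /
    algebraMap ℝ[X] (RatFunc ℝ) (X ^ 2 + Polynomial.C d * X + Polynomial.C q)

lemma Fmat_eval {n : ℕ} (A B : Matrix (Fin n) (Fin n) ℝ) (d q : ℝ) {s : ℂ}
    (h : s ^ 2 + d * s + q ≠ 0) : NP (Fmat A B d q) s ∧
    evalM (Fmat A B d q) s = (s ^ 2 + d * s + q)⁻¹ • (A.map Complex.ofReal + s • B.map Complex.ofReal) := by
  have h1 : (X ^ 2 + Polynomial.C d * X + Polynomial.C q : ℝ[X]).eval₂ (algebraMap ℝ ℂ) s ≠ 0 := by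
    simpa using h
  refine ⟨fun i j => np_div h1, ?_⟩
  ext i j
  simp only [evalM, Fmat, Matrix.of_apply]
  rw [evalC_div h1]
  simp
  field_simp
  ring

lemma den_ne {d q : ℝ} (hd : 0 ≤ d) (hq : 0 < q) {s : ℂ} (hs : 0 < s.re ∨ (0 < d ∧ 0 ≤ s.re) ∨ s = 0) :
    s ^ 2 + d * s + q ≠ 0 := by
  intro h
  have h1 := congrArg Complex.re h
  have h2 := congrArg Complex.im h
  simp [pow_two] at h1 h2
  have h3 : (2 * s.re + d) * s.im = 0 := by linarith
  rcases hs with hs | ⟨hd', hs⟩ | hs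
  · rcases mul_eq_zero.mp h3 with h4 | h4
    · linarith
    · rw [h4] at h1; nlinarith
  · rcases mul_eq_zero.mp h3 with h4 | h4
    · linarith
    · rw [h4] at h1; nlinarith [mul_nonneg hd hs]
  · subst hs; simp at h1; linarith

lemma Fmat_inf {n : ℕ} (A B : Matrix (Fin n) (Fin n) ℝ) (d q : ℝ) :
    Proper (Fmat A B d q) ∧ evalInf (Fmat A B d q) = 0 := by
  refine of_tendsto_inf ?_
  refine tendsto_pi_nhds.mpr fun i => tendsto_pi_nhds.mpr fun j => ?_
  have h1 := Polynomial.div_tendsto_atTop_zero_of_degree_lt (Polynomial.C (B i j) * X + Polynomial.C (A i j))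
    (X ^ 2 + Polynomial.C d * X + Polynomial.C q) (by
      refine lt_of_le_of_lt Polynomial.degree_linear_le ?_
      have := Polynomial.degree_quadratic (a := (1 : ℝ)) (b := d) (c := q) one_ne_zero
      rw [Polynomial.C_1, one_mul] at this
      rw [this]
      norm_num)
  unfold lInf
  rw [tendsto_map'_iff]
  have h2 := (Complex.continuous_ofReal.tendsto 0).comp h1
  have e : ((0 : Matrix (Fin n) (Fin n) ℝ).map Complex.ofReal) i j = ((0 : ℝ) : ℂ) := by simp
  rw [e]
  refine h2.congr' ?_
  filter_upwards [eventually_gt_atTop (|d| + |q| + 1)] with x hx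
  have hne : ((x : ℂ)) ^ 2 + d * x + q ≠ 0 := by
    have : x ^ 2 + d * x + q ≠ 0 := by
      have a1 := neg_abs_le d
      have a2 := neg_abs_le q
      have a3 := abs_nonneg d
      have a4 := abs_nonneg q
      have hx0 : 0 < x := by linarith
      have : 0 < x ^ 2 + d * x + q := by nlinarith
      exact this.ne'
    exact_mod_cast this
  simp only [Function.comp]
  rw [(Fmat_eval A B d q hne).2]
  simp
  field_simp
  ring

lemma Fmat_zero {n : ℕ} (A B : Matrix (Fin n) (Fin n) ℝ) {d q : ℝ} (hd : 0 ≤ d) (hq : 0 < q) :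
    NP (Fmat A B d q) 0 ∧ evalR (Fmat A B d q) 0 = q⁻¹ • A := by
  have h := Fmat_eval A B d q (den_ne hd hq (Or.inr (Or.inr rfl)))
  refine ⟨h.1, map_ofReal_inj ?_⟩
  rw [← evalM_zero_eq, h.2]
  ext i j
  simp

lemma Fmat_ni_stable {n : ℕ} {k d q : ℝ} (hk : 0 < k) (hd : 0 < d) (hq : 0 < q) :
    IsNI (Fmat (k • (1 : Matrix (Fin n) (Fin n) ℝ)) 0 d q) := by
  have hn : ∀ s : ℂ, 0 ≤ s.re → s ^ 2 + d * s + q ≠ 0 := fun s hs => den_ne hd.le hq (Or.inr (Or.inl ⟨hd, hs⟩))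
  refine ni_of_stable ⟨(Fmat_inf _ _ _ _).1, fun s hs => (Fmat_eval _ _ d q (hn s hs)).1⟩ fun ω hω u => ?_
  have h := hn (jw ω) (jw_re ω).ge
  have e : (k • (1 : Matrix (Fin n) (Fin n) ℝ)).map Complex.ofReal = (k : ℂ) • (1 : Matrix (Fin n) (Fin n) ℂ) := by
    ext i j
    by_cases h : i = j <;> simp [h]
  rw [(Fmat_eval _ _ d q h).2, qf_smul, qf_add, e, qf_smul, qf_smul, qf_one]
  have e2 : qf ((0 : Matrix (Fin n) (Fin n) ℝ).map Complex.ofReal) u = 0 := by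
    have : ((0 : Matrix (Fin n) (Fin n) ℝ).map Complex.ofReal) = 0 := by ext; simp
    rw [this]; simp [qf]
  rw [e2, mul_zero, add_zero, ← Complex.ofReal_mul, Complex.im_mul_ofReal, Complex.inv_im]
  refine mul_nonpos_of_nonpos_of_nonneg ?_ (by positivity)
  refine div_nonpos_of_nonpos_of_nonneg ?_ (Complex.normSq_nonneg _)
  simp [jw, pow_two]
  positivity

lemma Fmat_ni_lossless {n : ℕ} {A B : Matrix (Fin n) (Fin n) ℝ} {q : ℝ} (hq : 0 < q)
    (hA : A.IsHermitian) (hB : Bᵀ = -B)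
    (hpsd : ∀ u, 0 ≤ (qf (A.map Complex.ofReal + jw (Real.sqrt q) • B.map Complex.ofReal) u).re) :
    IsNI (Fmat A B 0 q) := by
  have herm : ∀ ω : ℝ, (A.map Complex.ofReal + jw ω • B.map Complex.ofReal).IsHermitian := by
    intro ω
    ext i j
    have h1 := congrFun (congrFun hA i) j
    have h2 := congrFun (congrFun hB i) j
    simp at h1 h2
    simp [jw, h1, h2]
  have him : ∀ ω u, (qf (A.map Complex.ofReal + jw ω • B.map Complex.ofReal) u).im = 0 := by
    intro ω u
    have := qf_conjT (A.map Complex.ofReal + jw ω • B.map Complex.ofReal) u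
    rw [herm ω] at this
    have h2 := congrArg Complex.im this
    rw [Complex.star_def, Complex.conj_im] at h2
    linarith
  have hden : ∀ ω : ℝ, jw ω ^ 2 + (0 : ℝ) * jw ω + q = ((q - ω ^ 2 : ℝ) : ℂ) := by
    intro ω
    apply Complex.ext <;> simp [jw, pow_two]
    ring
  have hfac : ∀ s : ℂ, s ^ 2 + (0 : ℝ) * s + q = (s - jw (Real.sqrt q)) * (s + jw (Real.sqrt q)) := by
    intro s
    have h1 : ((Real.sqrt q : ℝ) : ℂ) ^ 2 = q := by
      rw [← Complex.ofReal_pow, Real.sq_sqrt hq.le]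
    have h2 := Complex.I_sq
    simp only [jw, Complex.ofReal_zero]
    linear_combination -h1 + ((Real.sqrt q : ℝ) : ℂ) ^ 2 * h2
  have hsq := Real.sqrt_pos.mpr hq
  refine ni_mk (Fmat_inf _ _ _ _).1 (fun s hs => (Fmat_eval A B 0 q (den_ne le_rfl hq (Or.inl hs))).1)
    (Fmat_zero A B le_rfl hq).1 ?_ ?_
  · intro ω hω
    have e : ∀ᶠ ω' in 𝓝[≠] ω, q - ω' ^ 2 ≠ 0 := by
      have : ∀ᶠ ω' : ℝ in cofinite, ω' ≠ Real.sqrt q ∧ ω' ≠ - Real.sqrt q := by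
        rw [eventually_and]; constructor <;> simp
      filter_upwards [nhdsNE_le_cofinite ω this] with ω' ⟨h1, h2⟩ h3
      have h4 : (ω' - Real.sqrt q) * (ω' + Real.sqrt q) = 0 := by
        have := Real.sq_sqrt hq.le
        linear_combination -h3 - this
      rcases mul_eq_zero.mp h4 with h | h
      · exact h1 (by linarith)
      · exact h2 (by linarith)
    filter_upwards [e] with ω' h u
    have h' : jw ω' ^ 2 + (0 : ℝ) * jw ω' + q ≠ 0 := by
      rw [hden]; exact_mod_cast h
    rw [(Fmat_eval A B 0 q h').2, hden, ← Complex.ofReal_inv, qf_smul, Complex.im_ofReal_mul, him, mul_zero]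
  · intro ω hω
    by_cases hw : ω = Real.sqrt q
    · subst hw
      set w := Real.sqrt q with hwdef
      have hne : jw w + jw w ≠ 0 := by
        intro h
        have := congrArg Complex.im h
        simp [jw] at this
        linarith
      refine ⟨(((2 * w)⁻¹ : ℝ) : ℂ) • (A.map Complex.ofReal + jw w • B.map Complex.ofReal), ?_, ?_⟩
      · refine PosSemidef.of_dotProduct_mulVec_nonneg ?_ fun u => ?_
        · unfold Matrix.IsHermitian
          rw [conjTranspose_smul, herm w]
          simp
        · change 0 ≤ qf _ u
          rw [qf_smul]
          have : qf (A.map Complex.ofReal + jw w • B.map Complex.ofReal) u =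
            ((qf (A.map Complex.ofReal + jw w • B.map Complex.ofReal) u).re : ℂ) :=
            Complex.ext rfl (by rw [him]; simp)
          rw [this, ← Complex.ofReal_mul, Complex.zero_le_real]
          exact mul_nonneg (by positivity) (hpsd u)
      · have hc : ContinuousAt (fun s : ℂ => (Complex.I * (s + jw w)⁻¹) • (A.map Complex.ofReal + s • B.map Complex.ofReal)) (jw w) := by
          have c1 : ContinuousAt (fun s : ℂ => Complex.I * (s + jw w)⁻¹) (jw w) :=
            continuousAt_const.mul (ContinuousAt.inv₀ (by fun_prop) hne)
          have c2 : ContinuousAt (fun s : ℂ => A.map Complex.ofReal + s • B.map Complex.ofReal) (jw w) := by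
            have c3 : ContinuousAt (fun s : ℂ => s • B.map Complex.ofReal) (jw w) :=
              continuousAt_id.smul continuousAt_const
            exact continuousAt_const.add c3
          exact c1.smul c2
        have t := hc.tendsto.mono_left (nhdsWithin_le_nhds (s := {jw w}ᶜ))
        have e : Complex.I * (jw w + jw w)⁻¹ = (((2 * w)⁻¹ : ℝ) : ℂ) := by
          have : (w : ℂ) ≠ 0 := by exact_mod_cast hsq.ne'
          have hI := Complex.I_ne_zero
          simp [jw]
          field_simp
          norm_num
        simp only [e] at t
        refine t.congr' ?_
        have e1 : ∀ᶠ s in 𝓝[≠] jw w, s + jw w ≠ 0 :=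
          ((continuousAt_id.add continuousAt_const).eventually_ne hne).filter_mono nhdsWithin_le_nhds
        filter_upwards [self_mem_nhdsWithin, e1] with s h1 h2
        have h3 : s - jw w ≠ 0 := sub_ne_zero.mpr h1
        have h4 : s ^ 2 + (0 : ℝ) * s + q ≠ 0 := by rw [hfac]; exact mul_ne_zero h3 h2
        rw [(Fmat_eval A B 0 q h4).2, hfac, smul_smul, smul_smul]
        congr 1
        field_simp
    · refine res_zero (Fmat_eval A B 0 q ?_).1
      rw [hden]
      intro h
      have h3 : q - ω ^ 2 = 0 := by exact_mod_cast h
      apply hw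
      rw [show q = ω ^ 2 by linarith, Real.sqrt_sq hω.le]


lemma lt_of_qf {n : ℕ} {A : Matrix (Fin n) (Fin n) ℝ} {γ : ℝ} (hA : A.IsHermitian)
    (h : ∀ u, u ≠ 0 → (qf (A.map Complex.ofReal) u).re < γ * en u ^ 2) : LoewnerLT A (γ • 1) := by
  have h2 : (γ • (1 : Matrix (Fin n) (Fin n) ℝ)).IsHermitian := by
    unfold Matrix.IsHermitian; simp
  have h3 := h2.sub hA
  unfold LoewnerLT
  rw [posDef_iff_dotProduct_mulVec]
  refine ⟨h3, fun x hx => ?_⟩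
  have hu : (fun i => (x i : ℂ)) ≠ 0 := by
    intro h0
    apply hx
    ext i
    have := congrFun h0 i
    simpa using this
  have h4 := h _ hu
  have h5 := qf_real h3 (fun i => (x i : ℂ))
  rw [qf_map_smul_sub] at h5
  have h6 := congrArg Complex.re h5
  have e0 : (fun _ : Fin n => (0 : ℝ)) = 0 := rfl
  rw [Complex.sub_re, ← Complex.ofReal_mul, Complex.ofReal_re, Complex.ofReal_re] at h6
  simp only [Complex.ofReal_re, Complex.ofReal_im, e0, zero_dotProduct, add_zero] at h6
  have e1 : star x = x := by ext i; simp
  rw [e1]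
  change 0 < x ⬝ᵥ ((γ • (1 : Matrix (Fin n) (Fin n) ℝ) - A) *ᵥ x)
  rw [← h6]
  linarith

lemma fs_np {n : ℕ} {P C : Matrix (Fin n) (Fin n) (RatFunc ℝ)} (h : FeedbackStable P C) {s : ℂ}
    (hs : 0 ≤ s.re) : NP (1 - P * C)⁻¹ s ∧ NP ((1 - P * C)⁻¹ * P) s := by
  refine ⟨fun i j => ?_, fun i j => ?_⟩
  · exact h.2.2 s hs (Sum.inl i) (Sum.inl j)
  · exact h.2.2 s hs (Sum.inl i) (Sum.inr j)

lemma inj_of_stable {n : ℕ} {P C : Matrix (Fin n) (Fin n) (RatFunc ℝ)} (h : FeedbackStable P C) {s : ℂ}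
    (hs : 0 ≤ s.re) (hP : NP P s) (hC : NP C s) {v : Fin n → ℂ}
    (hv : evalM P s *ᵥ (evalM C s *ᵥ v) = v) : v = 0 := by
  have h1 : (1 - P * C)⁻¹ * (1 - P * C) = 1 := Matrix.nonsing_inv_mul _ (isUnit_iff_ne_zero.mpr h.1)
  have h2 := congrArg (fun M => evalM M s *ᵥ v) h1
  rw [evalM_mul (fs_np h hs).1 (NP.one.sub (hP.mul hC)), evalM_sub NP.one (hP.mul hC), evalM_mul hP hC,
    evalM_one, one_mulVec, ← mulVec_mulVec, sub_mulVec, one_mulVec, ← mulVec_mulVec, hv, sub_self, mulVec_zero] at h2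
  exact h2.symm

lemma map_smul_one {n : ℕ} (k : ℝ) :
    (k • (1 : Matrix (Fin n) (Fin n) ℝ)).map Complex.ofReal = (k : ℂ) • (1 : Matrix (Fin n) (Fin n) ℂ) := by
  ext i j
  by_cases h : i = j <;> simp [h]

lemma lt_smul_one {n : ℕ} {a γ : ℝ} (h : a < γ) : LoewnerLT (a • (1 : Matrix (Fin n) (Fin n) ℝ)) (γ • 1) := by
  refine lt_of_qf (by unfold Matrix.IsHermitian; simp) fun u hu => ?_
  rw [map_smul_one, qf_smul, qf_one, ← Complex.ofReal_mul, Complex.ofReal_re]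
  have := en_pos hu
  gcongr

/-- the hypothesis of the converse direction -/
def Robust {n : ℕ} (C : Matrix (Fin n) (Fin n) (RatFunc ℝ)) (γ : ℝ) : Prop :=
  ∀ P : Matrix (Fin n) (Fin n) (RatFunc ℝ), IsNI P → ¬ HasPole P 0 →
        (evalInf P).PosSemidef → LoewnerLT (evalR P 0) (γ • 1) → FeedbackStable P C

/-- no eigenvalue of `C(jω)` has positive imaginary part -/
lemma no_pos_eig {n : ℕ} {C : Matrix (Fin n) (Fin n) (RatFunc ℝ)} (hC : MemRHinf C) {γ : ℝ} (hγ : 0 < γ)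
    (hR : Robust C γ) {ω : ℝ} (hω : 0 < ω) {l : ℂ} {v : Fin n → ℂ} (hv : v ≠ 0)
    (he : evalM C (jw ω) *ᵥ v = l • v) : l.im ≤ 0 := by
  by_contra! hl
  obtain ⟨k, hk, hk1, hk2⟩ : ∃ k : ℝ, 0 < k ∧ k * (|l.re| + 1) ≤ ω ^ 2 / 2 ∧ k ≤ γ * ω ^ 2 / 4 := by
    have hp : 0 < |l.re| + 1 := by positivity
    refine ⟨min (ω ^ 2 / 2 / (|l.re| + 1)) (γ * ω ^ 2 / 4), lt_min (by positivity) (by positivity), ?_, min_le_right _ _⟩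
    rw [← le_div_iff₀ hp]
    exact min_le_left _ _
  set q := ω ^ 2 + k * l.re with hq
  set d := k * l.im / ω with hd
  have hqb : ω ^ 2 / 2 ≤ q := by
    have := neg_abs_le l.re
    nlinarith
  have hq0 : 0 < q := lt_of_lt_of_le (by positivity) hqb
  have hd0 : 0 < d := by positivity
  have hz := Fmat_zero (k • (1 : Matrix (Fin n) (Fin n) ℝ)) 0 hd0.le hq0
  have hne := den_ne hd0.le hq0 (s := jw ω) (Or.inr (Or.inl ⟨hd0, (jw_re ω).ge⟩))
  have hev := Fmat_eval (k • (1 : Matrix (Fin n) (Fin n) ℝ)) 0 d q hne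
  have hs := hR (Fmat (k • 1) 0 d q) (Fmat_ni_stable hk hd0 hq0) (np_iff.mp hz.1)
    (by rw [(Fmat_inf _ _ _ _).2]; exact PosSemidef.zero)
    (by
      rw [hz.2, smul_smul]
      apply lt_smul_one
      rw [inv_mul_lt_iff₀ hq0]
      have : 0 < ω ^ 2 := by positivity
      nlinarith)
  refine hv (inj_of_stable hs (jw_re ω).ge hev.1 (hC.2 _ (jw_re ω).ge) ?_)
  have hden : jw ω ^ 2 + d * jw ω + q = k * l := by
    have hω' : (ω : ℝ) ≠ 0 := hω.ne'
    apply Complex.ext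
    · simp [jw, pow_two, hq]
    · simp [jw, pow_two, hd]
      field_simp
  have hl0 : l ≠ 0 := by rintro rfl; simp at hl
  have hk0 : (k : ℂ) ≠ 0 := by exact_mod_cast hk.ne'
  rw [hev.2, hden, he, map_smul_one]
  have e2 : ((0 : Matrix (Fin n) (Fin n) ℝ).map Complex.ofReal) = 0 := by ext; simp
  rw [e2, smul_zero, add_zero, smul_smul, smul_mulVec, one_mulVec, smul_smul]
  rw [show ((k : ℂ) * l)⁻¹ * k * l = 1 by field_simp, one_smul]

/-- `C(jω)` has trivial kernel -/
lemma no_ker {n : ℕ} {C : Matrix (Fin n) (Fin n) (RatFunc ℝ)} (hC : MemRHinf C) {γ : ℝ} (hγ : 0 < γ)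
    (hR : Robust C γ) {ω : ℝ} (hω : 0 < ω) {v : Fin n → ℂ}
    (he : evalM C (jw ω) *ᵥ v = 0) : v = 0 := by
  set k := γ * ω ^ 2 / 2 with hk
  set q := ω ^ 2 with hq
  have hq0 : 0 < q := by positivity
  have hk0 : 0 < k := by positivity
  set P := Fmat (k • (1 : Matrix (Fin n) (Fin n) ℝ)) 0 0 q with hP
  have hz := Fmat_zero (k • (1 : Matrix (Fin n) (Fin n) ℝ)) 0 le_rfl hq0
  have e2 : ((0 : Matrix (Fin n) (Fin n) ℝ).map Complex.ofReal) = 0 := by ext; simp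
  have hni : IsNI P := by
    refine Fmat_ni_lossless hq0 (by unfold Matrix.IsHermitian; simp) (by simp) fun u => ?_
    rw [e2, smul_zero, add_zero, map_smul_one, qf_smul, qf_one, ← Complex.ofReal_mul, Complex.ofReal_re]
    positivity
  have hs : FeedbackStable P C := hR P hni (np_iff.mp hz.1)
    (by rw [(Fmat_inf _ _ _ _).2]; exact PosSemidef.zero)
    (by
      rw [hz.2, smul_smul]
      apply lt_smul_one
      rw [inv_mul_lt_iff₀ hq0]
      nlinarith [mul_pos hγ hq0])
  obtain ⟨nS, nT⟩ := fs_np hs (jw_re ω).ge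
  have nC : NP C (jw ω) := hC.2 _ (jw_re ω).ge
  have h1 : (1 - P * C)⁻¹ * (1 - P * C) = 1 := Matrix.nonsing_inv_mul _ (isUnit_iff_ne_zero.mpr hs.1)
  set S := (1 - P * C)⁻¹ with hS
  have h2 : S = 1 + S * P * C := by
    rw [Matrix.mul_sub, Matrix.mul_one, ← Matrix.mul_assoc] at h1
    exact sub_eq_iff_eq_add.mp h1
  set p : ℝ[X] := X ^ 2 + Polynomial.C 0 * X + Polynomial.C q with hp
  set f : RatFunc ℝ := algebraMap ℝ[X] (RatFunc ℝ) p with hf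
  have hf0 : f ≠ 0 := by
    rw [hf, Ne, FaithfulSMul.algebraMap_eq_zero_iff]
    intro h
    have := congrArg (Polynomial.eval 0) h
    simp [hp] at this
    linarith
  have h3 : f • P = RatFunc.C k • (1 : Matrix (Fin n) (Fin n) (RatFunc ℝ)) := by
    ext i j
    simp only [hP, Fmat, Matrix.smul_apply, Matrix.of_apply, smul_eq_mul, ← hp, ← hf]
    rw [mul_div_cancel₀ _ hf0]
    by_cases h : i = j <;> simp [h, Matrix.one_apply]
  have h4 : (f • (1 : Matrix (Fin n) (Fin n) (RatFunc ℝ))) * (S * P) = (RatFunc.C k • 1) * S := by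
    rw [smul_mul_assoc, one_mul, smul_mul_assoc, one_mul, ← mul_smul_comm, h3, mul_smul_comm, mul_one]
  have nf : ¬ IsPoleAt f (jw ω) := np_poly _ _
  have h5 := congrArg (fun M => evalM M (jw ω)) h4
  rw [evalM_mul (NP.scalar nf) nT, evalM_mul (NP.scalar (np_C _ _)) nS, evalM_scalar, evalM_scalar, evalC_C] at h5
  have h6 : evalC f (jw ω) = 0 := by
    rw [hf, evalC_poly]
    simp only [hp, hq, jw]
    simp [mul_pow]
  have hkc : (k : ℂ) ≠ 0 := by exact_mod_cast hk0.ne'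
  rw [h6, zero_smul, zero_mul, smul_mul_assoc, one_mul] at h5
  have h7 : evalM S (jw ω) = 0 := by
    rcases smul_eq_zero.mp h5.symm with h | h
    · exact absurd h hkc
    · exact h
  have h8 := congrArg (fun M => evalM M (jw ω) *ᵥ v) h2
  rw [evalM_add NP.one (nT.mul nC), evalM_mul nT nC, h7, evalM_one, add_mulVec, ← mulVec_mulVec, he] at h8
  simpa using h8.symm


lemma herm_interp {n : ℕ} {u v : Fin n → ℂ} (hu : u ≠ 0) {a : ℝ} (ha : star v ⬝ᵥ u = a) :
    ∃ M : Matrix (Fin n) (Fin n) ℂ, M.IsHermitian ∧ M *ᵥ u = v := by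
  have hN : 0 < en u ^ 2 := pow_pos (en_pos hu) 2
  set N : ℝ := en u ^ 2 with hNd
  have hNc : (N : ℂ) ≠ 0 := by exact_mod_cast hN.ne'
  have hd : star u ⬝ᵥ u = (N : ℂ) := dot_self u
  refine ⟨((N⁻¹ : ℝ) : ℂ) • (vecMulVec v (star u) + vecMulVec u (star v)) -
    ((a * N⁻¹ * N⁻¹ : ℝ) : ℂ) • vecMulVec u (star u), ?_, ?_⟩
  · ext i j
    simp [vecMulVec_apply]
    ring
  · rw [sub_mulVec, smul_mulVec, smul_mulVec, add_mulVec, vecMulVec_mulVec, vecMulVec_mulVec, vecMulVec_mulVec, hd, ha]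
    ext i
    simp
    field_simp
    ring

lemma re_qf_le {n : ℕ} (M : Matrix (Fin n) (Fin n) ℂ) (u : Fin n → ℂ) :
    (qf M u).re ≤ sn M * en u ^ 2 ∧ - (sn M * en u ^ 2) ≤ (qf M u).re := by
  have h := norm_qf_le M u
  have h2 := abs_le.mp ((Complex.abs_re_le_norm (qf M u)).trans h)
  exact ⟨h2.2, h2.1⟩

lemma interp_ni {n : ℕ} {M : Matrix (Fin n) (Fin n) ℂ} (hM : M.IsHermitian) {ω γ : ℝ} (hω : 0 < ω) (hγ : 0 < γ) :
    ∃ P : Matrix (Fin n) (Fin n) (RatFunc ℝ), IsNI P ∧ ¬ HasPole P 0 ∧ (evalInf P).PosSemidef ∧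
      LoewnerLT (evalR P 0) (γ • 1) ∧ NP P (jw ω) ∧ evalM P (jw ω) = M := by
  set A : Matrix (Fin n) (Fin n) ℝ := M.map Complex.re with hA
  set B : Matrix (Fin n) (Fin n) ℝ := M.map Complex.im with hB
  have hMe : ∀ i j, star (M j i) = M i j := fun i j => by
    have := congrFun (congrFun hM i) j
    simpa using this
  have hAh : A.IsHermitian := by
    ext i j
    simp [hA, ← hMe i j]
  have hBs : Bᵀ = -B := by
    ext i j
    simp [hB, ← hMe i j]
  have hAB : A.map Complex.ofReal + Complex.I • B.map Complex.ofReal = M := by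
    ext i j
    apply Complex.ext <;> simp [hA, hB]
  have sA : sn (A.map Complex.ofReal) ≤ sn M := by
    unfold sn
    gcongr with i _ j _
    simpa [hA] using Complex.abs_re_le_norm (M i j)
  have sB : sn (B.map Complex.ofReal) ≤ sn M := by
    unfold sn
    gcongr with i _ j _
    simpa [hB] using Complex.abs_im_le_norm (M i j)
  have sM := sn_nonneg M
  set κ : ℝ := 3 * sn M + 1 with hκ
  have hκ0 : 0 < κ := by positivity
  have hω2 : 0 < ω ^ 2 := by positivity
  obtain ⟨η, hη, hη1, hη2⟩ : ∃ η : ℝ, 0 < η ∧ η ≤ ω ^ 2 / 2 ∧ 8 * κ * η ≤ γ * ω ^ 2 := by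
    refine ⟨min (ω ^ 2 / 2) (γ * ω ^ 2 / (8 * κ)), lt_min (by positivity) (by positivity), min_le_left _ _, ?_⟩
    rw [mul_comm, ← le_div_iff₀ (by positivity)]
    exact min_le_right _ _
  set q1 := ω ^ 2 + η with hq1
  set q2 := ω ^ 2 - η with hq2
  have hq1' : 0 < q1 := by positivity
  have hq2' : ω ^ 2 / 2 ≤ q2 := by linarith
  have hq2'' : 0 < q2 := by linarith
  set A1 : Matrix (Fin n) (Fin n) ℝ := η • (A + κ • 1) with hA1
  set B1 : Matrix (Fin n) (Fin n) ℝ := (η / ω) • B with hB1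
  set A2 : Matrix (Fin n) (Fin n) ℝ := (κ * η) • 1 with hA2
  have hone : (1 : Matrix (Fin n) (Fin n) ℝ).IsHermitian := by unfold Matrix.IsHermitian; simp
  have hA1h : A1.IsHermitian := by
    have hAt : Aᵀ = A := by simpa using hAh.eq
    unfold Matrix.IsHermitian
    simp [hA1, hAt]
  have hA2h : A2.IsHermitian := by unfold Matrix.IsHermitian; simp [hA2]
  have mA1 : A1.map Complex.ofReal = (η : ℂ) • (A.map Complex.ofReal + (κ : ℂ) • 1) := by
    rw [← map_smul_one]
    ext i j; simp [hA1]; ring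
  have mB1 : B1.map Complex.ofReal = ((η / ω : ℝ) : ℂ) • B.map Complex.ofReal := by
    ext i j; simp [hB1]
  have m0 : ((0 : Matrix (Fin n) (Fin n) ℝ).map Complex.ofReal) = 0 := by ext; simp
  have ni1 : IsNI (Fmat A1 B1 0 q1) := by
    refine Fmat_ni_lossless hq1' hA1h (by simp [hB1, hBs]) fun u => ?_
    set w := Real.sqrt q1 with hw
    have hw2 : w ≤ 2 * ω := by
      rw [hw]
      apply Real.sqrt_le_iff.mpr
      constructor
      · positivity
      · nlinarith
    have hw0 : 0 ≤ w := Real.sqrt_nonneg _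
    have e1 : jw w * ((η / ω : ℝ) : ℂ) = ((η * (w / ω) : ℝ) : ℂ) * Complex.I := by
      simp [jw]; field_simp
    rw [mA1, mB1, smul_smul, e1, ← smul_smul, qf_add, qf_smul, qf_add, qf_smul, qf_one, qf_smul,
      Complex.add_re, Complex.re_ofReal_mul, Complex.re_ofReal_mul, Complex.add_re, ← Complex.ofReal_mul, Complex.ofReal_re]
    have b1 := (re_qf_le (A.map Complex.ofReal) u).2
    have b2 := (re_qf_le (Complex.I • B.map Complex.ofReal) u).2
    have sB' : sn (Complex.I • B.map Complex.ofReal) ≤ sn M := by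
      refine le_trans (le_of_eq ?_) sB
      unfold sn
      simp
    have he := sq_nonneg (en u)
    have hr : w / ω ≤ 2 := by rw [div_le_iff₀ hω]; exact hw2
    have hr0 : 0 ≤ w / ω := by positivity
    have c1 := mul_le_mul_of_nonneg_right sA he
    have c2 := mul_le_mul_of_nonneg_right sB' he
    have c4 : 0 ≤ sn M * en u ^ 2 := by positivity
    have c3 : - (2 * (sn M * en u ^ 2)) ≤ w / ω * (qf (Complex.I • B.map Complex.ofReal) u).re := by
      have d1 : - (sn M * en u ^ 2) ≤ (qf (Complex.I • B.map Complex.ofReal) u).re := by linarith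
      nlinarith
    have c5 : 0 ≤ (qf (A.map Complex.ofReal) u).re + κ * en u ^ 2 + w / ω * (qf (Complex.I • B.map Complex.ofReal) u).re := by
      rw [hκ]; nlinarith
    have := mul_nonneg hη.le c5
    linarith
  have ni2 : IsNI (Fmat A2 0 0 q2) := by
    refine Fmat_ni_lossless hq2'' hA2h (by simp) fun u => ?_
    rw [m0, smul_zero, add_zero, map_smul_one, qf_smul, qf_one, ← Complex.ofReal_mul, Complex.ofReal_re]
    positivity
  have z1 := Fmat_zero A1 B1 le_rfl hq1'
  have z2 := Fmat_zero A2 0 le_rfl hq2''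
  obtain ⟨hni, hnp, hinf⟩ := ni_add ni1 ni2 z1.1 z2.1
  have hz : evalR (Fmat A1 B1 0 q1 + Fmat A2 0 0 q2) 0 = q1⁻¹ • A1 + q2⁻¹ • A2 := by
    apply map_ofReal_inj
    rw [← evalM_zero_eq, evalM_add z1.1 z2.1, evalM_zero_eq, evalM_zero_eq, z1.2, z2.2]
    ext i j; simp
  have hden1 : jw ω ^ 2 + (0 : ℝ) * jw ω + q1 = (η : ℂ) := by
    apply Complex.ext <;> simp [jw, pow_two, hq1]
  have hden2 : jw ω ^ 2 + (0 : ℝ) * jw ω + q2 = -(η : ℂ) := by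
    apply Complex.ext <;> simp [jw, pow_two, hq2]
    ring
  have hηc : (η : ℂ) ≠ 0 := by exact_mod_cast hη.ne'
  have hωc : (ω : ℂ) ≠ 0 := by exact_mod_cast hω.ne'
  have v1 := Fmat_eval A1 B1 0 q1 (s := jw ω) (by rw [hden1]; exact hηc)
  have v2 := Fmat_eval A2 0 0 q2 (s := jw ω) (by rw [hden2]; exact neg_ne_zero.mpr hηc)
  refine ⟨_, hni, np_iff.mp hnp, ?_, ?_, v1.1.add v2.1, ?_⟩
  · rw [hinf, (Fmat_inf _ _ _ _).2, (Fmat_inf _ _ _ _).2, add_zero]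
    exact PosSemidef.zero
  · rw [hz]
    refine lt_of_qf ?_ fun u hu => ?_
    · have t1 : A1ᵀ = A1 := by simpa using hA1h.eq
      have t2 : A2ᵀ = A2 := by simpa using hA2h.eq
      unfold Matrix.IsHermitian
      simp [t1, t2]
    · have e : (q1⁻¹ • A1 + q2⁻¹ • A2).map Complex.ofReal =
          ((q1⁻¹ : ℝ) : ℂ) • A1.map Complex.ofReal + ((q2⁻¹ : ℝ) : ℂ) • A2.map Complex.ofReal := by
        ext i j; simp
      rw [e, mA1, map_smul_one, qf_add, qf_smul, qf_smul, qf_smul, qf_add, qf_smul, qf_smul, qf_one, Complex.add_re,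
        Complex.re_ofReal_mul, Complex.re_ofReal_mul, Complex.re_ofReal_mul, Complex.add_re, ← Complex.ofReal_mul,
        ← Complex.ofReal_mul, Complex.ofReal_re, Complex.ofReal_re]
      have b1 := (re_qf_le (A.map Complex.ofReal) u).1
      have he : 0 < en u ^ 2 := pow_pos (en_pos hu) 2
      have c1 := mul_le_mul_of_nonneg_right sA he.le
      have i1 : q1⁻¹ ≤ (ω ^ 2)⁻¹ := inv_anti₀ hω2 (by linarith)
      have i2 : q2⁻¹ ≤ (ω ^ 2 / 2)⁻¹ := inv_anti₀ (by positivity) hq2'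
      have c0 : 0 ≤ sn M * en u ^ 2 := by positivity
      have c2 : (qf (A.map Complex.ofReal) u).re + κ * en u ^ 2 ≤ 2 * κ * en u ^ 2 := by
        rw [hκ]; nlinarith
      calc _ ≤ q1⁻¹ * (η * (2 * κ * en u ^ 2)) + q2⁻¹ * (κ * η * en u ^ 2) := by gcongr
        _ ≤ (ω ^ 2)⁻¹ * (η * (2 * κ * en u ^ 2)) + (ω ^ 2 / 2)⁻¹ * (κ * η * en u ^ 2) := by gcongr
        _ = (4 * κ * η) / ω ^ 2 * en u ^ 2 := by field_simp; ring
        _ < γ * en u ^ 2 := by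
          refine mul_lt_mul_of_pos_right ?_ he
          rw [div_lt_iff₀ hω2]
          have : 0 < γ * ω ^ 2 := by positivity
          have : 0 < κ * η := by positivity
          nlinarith
  · rw [evalM_add v1.1 v2.1, v1.2, v2.2, hden1, hden2, mA1, mB1, m0, map_smul_one]
    conv_rhs => rw [← hAB]
    ext i j
    simp [jw]
    field_simp
    ring

lemma no_real {n : ℕ} {C : Matrix (Fin n) (Fin n) (RatFunc ℝ)} (hC : MemRHinf C) {γ : ℝ} (hγ : 0 < γ)
    (hR : Robust C γ) {ω : ℝ} (hω : 0 < ω) {v : Fin n → ℂ}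
    (he : (qf (evalM C (jw ω)) v).im = 0) : v = 0 := by
  by_cases hu : evalM C (jw ω) *ᵥ v = 0
  · exact no_ker hC hγ hR hω hu
  · obtain ⟨M, hM, hMu⟩ := herm_interp (v := v) (a := (qf (evalM C (jw ω)) v).re) hu
      (Complex.ext (by simp [qf]) (by rw [Complex.ofReal_im]; exact he))
    obtain ⟨P, h1, h2, h3, h4, h5, h6⟩ := interp_ni hM hω hγ
    refine inj_of_stable (hR P h1 h2 h3 h4) (jw_re ω).ge h5 (hC.2 _ (jw_re ω).ge) ?_
    rw [h6, hMu]

lemma sni_of_robust {n : ℕ} {C : Matrix (Fin n) (Fin n) (RatFunc ℝ)} (hC : MemRHinf C) {γ : ℝ} (hγ : 0 < γ)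
    (hR : Robust C γ) : IsSNI C := by
  refine ⟨hC, fun ω hω => niKer_pd.mpr fun v1 hv1 => ?_⟩
  by_contra! hp
  set M := evalM C (jw ω) with hM
  have hne : (qf M v1).im ≠ 0 := fun h => hv1 (no_real hC hγ hR hω h)
  have hp' : 0 < (qf M v1).im := lt_of_le_of_ne hp hne.symm
  have : Nontrivial (Fin n → ℂ) := ⟨v1, 0, hv1⟩
  obtain ⟨l, hl⟩ := Module.End.exists_eigenvalue (Matrix.toLin' M)
  obtain ⟨v, hv⟩ := hl.exists_hasEigenvector
  have hv0 : v ≠ 0 := hv.2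
  have hev : M *ᵥ v = l • v := by
    have := hv.apply_eq_smul
    simpa using this
  have hl := no_pos_eig hC hγ hR hω hv0 hev
  have hqv : (qf M v).im ≤ 0 := by
    unfold qf
    rw [hev, dotProduct_smul, dot_self, smul_eq_mul, Complex.im_mul_ofReal]
    exact mul_nonpos_of_nonpos_of_nonneg hl (sq_nonneg _)
  have hcont : ContinuousOn (fun t : ℝ => (qf M ((1 - (t : ℂ)) • v1 + (t : ℂ) • v)).im) (Set.Icc 0 1) := by
    refine (Complex.continuous_im.comp ((continuous_qf_right M).comp ?_)).continuousOn
    fun_prop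
  have hivt := intermediate_value_Icc' zero_le_one hcont
  have h0 : (0 : ℝ) ∈ Set.Icc ((fun t : ℝ => (qf M ((1 - (t : ℂ)) • v1 + (t : ℂ) • v)).im) 1)
      ((fun t : ℝ => (qf M ((1 - (t : ℂ)) • v1 + (t : ℂ) • v)).im) 0) := by
    simp [hqv, hp]
  obtain ⟨t, ht, hft⟩ := hivt h0
  have hz := no_real hC hγ hR hω hft
  by_cases ht0 : (t : ℂ) = 0
  · rw [ht0] at hz
    simp at hz
    exact hv1 hz
  · by_cases ht1 : (1 - (t : ℂ)) = 0
    · rw [ht1, zero_smul, zero_add] at hz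
      rcases smul_eq_zero.mp hz with h | h
      · exact ht0 h
      · exact hv0 h
    · have e : v1 = (-((1 - (t : ℂ))⁻¹ * t)) • v := by
        have := eq_neg_of_add_eq_zero_left hz
        rw [neg_smul, ← smul_smul, ← smul_neg, ← this, smul_smul, inv_mul_cancel₀ ht1, one_smul]
      rw [e, qf_scale, Complex.im_ofReal_mul] at hp'
      have := mul_nonpos_of_nonneg_of_nonpos (sq_nonneg ‖-((1 - (t : ℂ))⁻¹ * t)‖) hqv
      linarith


lemma static_herm {n : ℕ} {C : Matrix (Fin n) (Fin n) (RatFunc ℝ)} (hC : IsSNI C) :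
    (evalR C 0).IsHermitian := by
  have hc : ContinuousAt (evalM C) (jw 0) := continuousAt_evalM (hC.1.2 _ (jw_re 0).ge)
  have j0 : jw 0 = 0 := by simp [jw]
  have h1 : ∀ u, (qf (evalM C 0) u).im ≤ 0 := by
    intro u
    have h5 := ((Complex.continuous_im.comp (continuous_qf_left u)).continuousAt.tendsto).comp
      (hc.tendsto.comp ((continuous_jw.tendsto 0).mono_left (nhdsWithin_le_nhds (s := Set.Ioi 0))))
    rw [j0] at h5
    refine le_of_tendsto h5 ?_
    filter_upwards [self_mem_nhdsWithin] with ω hω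
    exact niKer_psd.mp (hC.2 ω hω).posSemidef u
  have hr : (evalM C 0).map star = evalM C 0 := by
    rw [evalM_zero_eq]; ext i j; simp
  have h2 : ∀ u, (qf (evalM C 0) u).im = 0 := by
    intro u
    have a := h1 u
    have b := h1 (star u)
    have e := qf_mapstar (evalM C 0) u
    rw [hr] at e
    have e2 := congrArg Complex.im e
    rw [Complex.star_def, Complex.conj_im] at e2
    linarith
  have hp : (niKer (evalM C 0)).PosSemidef := niKer_psd.mpr h1
  have hz : ∀ u, niKer (evalM C 0) *ᵥ u = 0 := by
    intro u
    rw [← hp.dotProduct_mulVec_zero_iff]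
    have := qf_niKer (evalM C 0) u
    unfold qf at this
    rw [this]
    have h3 := h2 u
    unfold qf at h3
    rw [h3]
    simp
  have hk : niKer (evalM C 0) = 0 := by
    apply Matrix.ext_of_mulVec_single
    intro i
    rw [hz, zero_mulVec]
  unfold niKer at hk
  rcases smul_eq_zero.mp hk with h | h
  · exact absurd h Complex.I_ne_zero
  · have h4 := sub_eq_zero.mp h
    rw [evalM_zero_eq] at h4
    apply map_ofReal_inj
    rw [h4]
    ext i j
    have := congrFun (congrFun h4 j) i
    simp at this
    simp [this]

lemma const_ni {n : ℕ} {a : ℝ} (ha : 0 ≤ a) :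
    IsNI ((RatFunc.C a) • (1 : Matrix (Fin n) (Fin n) (RatFunc ℝ))) ∧
    evalInf ((RatFunc.C a) • (1 : Matrix (Fin n) (Fin n) (RatFunc ℝ))) = a • 1 ∧
    evalR ((RatFunc.C a) • (1 : Matrix (Fin n) (Fin n) (RatFunc ℝ))) 0 = a • 1 := by
  have he : ∀ s, evalM ((RatFunc.C a) • (1 : Matrix (Fin n) (Fin n) (RatFunc ℝ))) s = (a : ℂ) • 1 := by
    intro s; rw [evalM_scalar, evalC_C]
  obtain ⟨h1, h2⟩ := of_tendsto_inf (G := (RatFunc.C a) • (1 : Matrix (Fin n) (Fin n) (RatFunc ℝ))) (A := a • 1) (by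
    rw [map_smul_one, funext he]; exact tendsto_const_nhds)
  refine ⟨ni_of_stable ⟨h1, fun s _ => NP.scalar (np_C a s)⟩ fun ω _ u => ?_, h2, map_ofReal_inj ?_⟩
  · rw [he, qf_smul, qf_one, ← Complex.ofReal_mul, Complex.ofReal_im]
  · rw [← evalM_zero_eq, he, map_smul_one]

lemma static_le {n : ℕ} {C : Matrix (Fin n) (Fin n) (RatFunc ℝ)} (hC : MemRHinf C) {γ : ℝ} (hγ : 0 < γ)
    (hR : Robust C γ) : LoewnerLE (evalR C 0) (γ⁻¹ • 1) := by
  have hS := static_herm (sni_of_robust hC hγ hR)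
  have hone : (γ⁻¹ • (1 : Matrix (Fin n) (Fin n) ℝ)).IsHermitian := by
    unfold Matrix.IsHermitian; simp
  have hH := hone.sub hS
  unfold LoewnerLE
  rw [hH.posSemidef_iff_eigenvalues_nonneg]
  by_contra hneg
  rw [Pi.le_def] at hneg
  push Not at hneg
  obtain ⟨i, hi⟩ := hneg
  have hev := hH.mulVec_eigenvectorBasis i
  set m := hH.eigenvalues i with hm
  have hx0 : (hH.eigenvectorBasis i) ≠ 0 := hH.eigenvectorBasis.orthonormal.ne_zero i
  set x : Fin n → ℝ := (hH.eigenvectorBasis i).ofLp with hx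
  have hx1 : x ≠ 0 := by
    intro h
    apply hx0
    ext k
    exact congrFun h k
  have hi' : m < 0 := hi
  set l := γ⁻¹ - m with hl
  have hγi : 0 < γ⁻¹ := by positivity
  have hl0 : γ⁻¹ < l := by linarith
  have hlp : 0 < l := by linarith
  have hCx : evalR C 0 *ᵥ x = l • x := by
    rw [sub_mulVec, smul_mulVec, one_mulVec] at hev
    rw [hl, sub_smul, ← hev]
    abel
  obtain ⟨n1, n2, n3⟩ := const_ni (n := n) (a := l⁻¹) (by positivity)
  have n0 : NP ((RatFunc.C l⁻¹) • (1 : Matrix (Fin n) (Fin n) (RatFunc ℝ))) 0 := NP.scalar (np_C _ _)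
  have hst := hR _ n1 (np_iff.mp n0)
    (by
      rw [n2]
      exact PosSemidef.one.smul (by positivity))
    (by
      rw [n3]
      apply lt_smul_one
      exact inv_lt_of_inv_lt₀ hγ hl0)
  have hz := inj_of_stable hst (s := 0) (by simp) n0 (hC.2 0 (by simp)) (v := fun k => (x k : ℂ)) (by
    have e1 : evalM C 0 *ᵥ (fun k => (x k : ℂ)) = (l : ℂ) • (fun k => (x k : ℂ)) := by
      rw [evalM_zero_eq]
      ext k
      have := congrFun hCx k
      have h2 := congrArg (fun r : ℝ => (r : ℂ)) this
      simpa [mulVec, dotProduct] using h2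
    have hlc : (l : ℂ) ≠ 0 := by exact_mod_cast hlp.ne'
    rw [e1, evalM_scalar, evalC_C, smul_mulVec, one_mulVec, smul_smul]
    push_cast
    rw [inv_mul_cancel₀ hlc, one_smul])
  apply hx1
  ext k
  have := congrFun hz k
  simpa using this

/-- converse theorem for NI uncertainty without origin poles,
nonnegative instantaneous gain and strictly bounded static gain. -/
theorem converse_N0_instantaneous_nonneg {n : ℕ} (C : Matrix (Fin n) (Fin n) (RatFunc ℝ)) (hC : MemRHinf C)
    (γ : ℝ) (hγ : 0 < γ) :
    (∀ P : Matrix (Fin n) (Fin n) (RatFunc ℝ), IsNI P → ¬ HasPole P 0 →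
        (evalInf P).PosSemidef → LoewnerLT (evalR P 0) (γ • 1) → FeedbackStable P C) ↔
      (IsSNI C ∧ LoewnerLE (evalR C 0) (γ⁻¹ • 1)) := by
  constructor
  · intro h
    exact ⟨sni_of_robust hC hγ h, static_le hC hγ h⟩
  · rintro ⟨h1, h2⟩ P hP h0 hi hlt
    exact sufficiency hP h0 hγ hi hlt h1 h2

end NIControl
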